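/- For every n ≥ 4, the functor St(n,−) satisfies the Tulenbaev lifting property: for every commutative ring R and every non-nilpotent a ∈ R there exists a group homomorphism T : St(n, R_a[X], XR_a[X]) → St(n, R⋉XR_a[X]) such that μ_* ∘ T is the inclusion St(n, R_a[X], XR_a[X]) ↪ St(n, R_a[X]), and T composed with the restriction of μ_* to St(n, R⋉XR_a[X], XR_a[X]) is the inclusion St(n, R⋉XR_a[X], XR_a[X]) ↪ St(n, R⋉XR_a[X]). -/

import Mathlib

open scoped commutatorElement

/-- Generators of the Steinberg group: triples (i,j,r) with i ≠ j. -/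
abbrev StGen (n : ℕ) (R : Type) : Type := {p : Fin n × Fin n // p.1 ≠ p.2} × R

/-- The Steinberg relations. -/
inductive StRels (n : ℕ) (R : Type) [CommRing R] : FreeGroup (StGen n R) → Prop
  | add (i j : Fin n) (hij : i ≠ j) (r s : R) :
      StRels n R (FreeGroup.of (⟨(i, j), hij⟩, r) * FreeGroup.of (⟨(i, j), hij⟩, s) *
        (FreeGroup.of (⟨(i, j), hij⟩, r + s))⁻¹)
  | commZero (i j h k : Fin n) (hij : i ≠ j) (hhk : h ≠ k) (hjh : j ≠ h) (hik : i ≠ k) (r s : R) :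
      StRels n R ⁅(FreeGroup.of (⟨(i, j), hij⟩, r) : FreeGroup (StGen n R)), FreeGroup.of (⟨(h, k), hhk⟩, s)⁆
  | commAdd (i j k : Fin n) (hij : i ≠ j) (hjk : j ≠ k) (hik : i ≠ k) (r s : R) :
      StRels n R (⁅(FreeGroup.of (⟨(i, j), hij⟩, r) : FreeGroup (StGen n R)), FreeGroup.of (⟨(j, k), hjk⟩, s)⁆ *
        (FreeGroup.of (⟨(i, k), hik⟩, r * s))⁻¹)

/-- The Steinberg group `St(n, R)`. -/
abbrev SteinbergGroup (n : ℕ) (R : Type) [CommRing R] : Type :=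
  PresentedGroup {w | StRels n R w}

/-- The generator `x_{ij}(r)` of the Steinberg group. -/
def stx (n : ℕ) (R : Type) [CommRing R] (i j : Fin n) (hij : i ≠ j) (r : R) :
    SteinbergGroup n R :=
  PresentedGroup.of (⟨(i, j), hij⟩, r)

/-- The fiber product ring `R ⋉ XR_a[X] = {(r, h) : h(0) = λ_a r}`. -/
def fiberRing (R : Type) [CommRing R] (a : R) :
    Subring (R × Polynomial (Localization.Away a)) where
  carrier := {p | Polynomial.eval 0 p.2 = algebraMap R (Localization.Away a) p.1}
  zero_mem' := by simp
  one_mem' := by simp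
  add_mem' := by
    intro x y hx hy
    simp only [Set.mem_setOf_eq, Prod.snd_add, Polynomial.eval_add, Prod.fst_add, map_add] at *
    rw [hx, hy]
  neg_mem' := by
    intro x hx
    simp only [Set.mem_setOf_eq, Prod.snd_neg, Polynomial.eval_neg, Prod.fst_neg, map_neg] at *
    rw [hx]
  mul_mem' := by
    intro x y hx hy
    simp only [Set.mem_setOf_eq, Prod.snd_mul, Polynomial.eval_mul, Prod.fst_mul, map_mul] at *
    rw [hx, hy]

/-- The Tulenbaev lifting property for the functor `St(n, -)`. -/
def TulenbaevLifting (n : ℕ) : Prop :=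
  ∀ (R : Type) [CommRing R] (a : R), ¬ IsNilpotent a →
  ∀ (pSt : SteinbergGroup n (fiberRing R a) →* SteinbergGroup n R),
    (∀ (i j : Fin n) (hij : i ≠ j) (x : fiberRing R a),
      pSt (stx n (fiberRing R a) i j hij x) = stx n R i j hij x.val.1) →
  ∀ (μSt : SteinbergGroup n (fiberRing R a) →*
      SteinbergGroup n (Polynomial (Localization.Away a))),
    (∀ (i j : Fin n) (hij : i ≠ j) (x : fiberRing R a),
      μSt (stx n (fiberRing R a) i j hij x) =
        stx n (Polynomial (Localization.Away a)) i j hij x.val.2) →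
  ∀ (ev0 : SteinbergGroup n (Polynomial (Localization.Away a)) →*
      SteinbergGroup n (Localization.Away a)),
    (∀ (i j : Fin n) (hij : i ≠ j) (p : Polynomial (Localization.Away a)),
      ev0 (stx n (Polynomial (Localization.Away a)) i j hij p) =
        stx n (Localization.Away a) i j hij (Polynomial.eval 0 p)) →
  ∃ T : ev0.ker →* SteinbergGroup n (fiberRing R a),
    (∀ g : ev0.ker, μSt (T g) = (g : SteinbergGroup n (Polynomial (Localization.Away a)))) ∧
    (∀ h : SteinbergGroup n (fiberRing R a), pSt h = 1 →
      ∀ hm : μSt h ∈ ev0.ker, T ⟨μSt h, hm⟩ = h)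

/-!
Write `B = R ⋉ X R_a[X]` and `A = R_a[X]`, which is a localization of `B`. For a vector `u` over
`B` and a Koszul relation `v = c (u_l e_k - u_k e_l)`, an index `i` outside `{k, l}` gives a lift
of the transvection `1 + u vᵀ` to `St(n, B)`. Since `n ≥ 4` there are two such indices, so the lift
does not depend on `i`; the lifts commute with each other, and conjugation by `St(n, B)` turns
products of lifts for `u` into products of lifts for the image of `u`. They behave well under
rescaling of `u`, so clearing denominators extends them to vectors over `A`: a `B`-linear map
`j : A → B` and a matrix `γ ∈ SL(n, A)` determine a lift to `St(n, B)` of the conjugate by `γ` of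
`1 + j(1) e_{ik}`.

Multiplication by `p - p(0)` is such a map `j`. Sending `x_{ik}(p)` to the pair consisting of these
lifts, as a function of `γ`, and of the transvection `1 + p(0) e_{ik}` respects the Steinberg
relations in a semidirect product of the functions `SL(n, A) → St(n, B)` with `SL(n, A)`. The first
component at `γ = 1` is multiplicative on the kernel of evaluation at `X = 0`, and this is `T`.
-/

namespace SteinbergGroup

open MulAut Multiplicative
open scoped MatrixGroups

section Group

variable {G : Type*} [Group G] {a b c : G}

lemma conj_eq_self_iff : conj a b = b ↔ Commute a b := by
  rw [conj_apply, mul_inv_eq_iff_eq_mul]; rfl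

lemma conj_eq_commutatorElement_mul (a b : G) : conj a b = ⁅a, b⁆ * b := by
  simp [commutatorElement_def]

lemma commute_commutatorElement (hab : Commute a b) (hac : Commute a c) : Commute a ⁅b, c⁆ := by
  rw [← conj_eq_self_iff] at hab hac ⊢
  rw [map_commutatorElement, hab, hac]

lemma commutatorElement_mul_right_of_commute (hba : Commute b a) (hbc : Commute b c) :
    ⁅a, b * c⁆ = ⁅a, c⁆ := by
  rw [commutatorElement_mul_right_eq_mul_conj, commutatorElement_eq_one_iff_commute.2 hba.symm,
    one_mul, ← conj_apply, conj_eq_self_iff.2 (commute_commutatorElement hba hbc)]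

-- The Hall–Witt identity for `x, y, z`, one of whose three factors is trivial.
lemma commutatorElement_assoc_of_commute {x y z : G} (hxz : Commute x z)
    (hxy : Commute ⁅x, y⁆ ⁅y, z⁆) (hz : Commute ⁅y, z⁆ z) : ⁅⁅x, y⁆, z⁆ = ⁅x, ⁅y, z⁆⁆ := by
  have hallWitt := commutatorElement_commutatorElement_conj_mul x y z
  rw [commutatorElement_eq_one_iff_commute.2 hxz.symm, commutatorElement_one_left, mul_one,
    ← conj_apply z x, conj_eq_self_iff.2 hxz.symm, ← conj_apply, conj_eq_commutatorElement_mul,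
    commutatorElement_mul_right_of_commute hxy.symm hz] at hallWitt
  rw [eq_inv_of_mul_eq_one_left hallWitt, commutatorElement_inv]

end Group

section AdditiveProd

variable {ι A G : Type*}

lemma single_induction_of_eq_zero [Finite ι] [DecidableEq ι] [AddCommMonoid A] (s : Set ι)
    {p : (ι → A) → Prop} (v : ι → A) (hv : ∀ k ∈ s, v k = 0) (zero : p 0)
    (add : ∀ v w, (∀ k ∈ s, v k = 0) → (∀ k ∈ s, w k = 0) → p v → p w → p (v + w))
    (single : ∀ k ∉ s, ∀ a, p (Pi.single k a)) : p v := by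
  cases nonempty_fintype ι
  suffices (∀ k ∈ s, v k = 0) ∧ p v from this.2
  rw [← Finset.univ_sum_single v]
  refine Finset.sum_induction _ (fun w => (∀ k ∈ s, w k = 0) ∧ p w) ?_ ⟨fun _ _ => rfl, zero⟩ ?_
  · rintro v w ⟨hvs, hv⟩ ⟨hws, hw⟩
    exact ⟨fun k hk => by simp [hvs k hk, hws k hk], add v w hvs hws hv hw⟩
  · intro k _
    by_cases hk : k ∈ s
    · simpa [hv k hk] using zero
    · exact ⟨fun l hl => Pi.single_eq_of_ne (by rintro rfl; exact hk hl) _, single k hk _⟩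

variable [Fintype ι] [AddGroup A] [Group G]

/-- The homomorphism `v ↦ ∏ₖ f k (v k)` assembled from additive, pairwise commuting families
`f k : A → G`; `additiveProd_single` characterises it. -/
def additiveProd (f : ι → A → G) (hadd : ∀ k a b, f k (a + b) = f k a * f k b)
    (hcomm : ∀ k l a b, Commute (f k a) (f l b)) : Multiplicative (ι → A) →* G :=
  (MonoidHom.noncommPiCoprod
    (fun k => MonoidHom.mk' (f k ∘ toAdd) fun a b => hadd k a.toAdd b.toAdd)
    fun k l _ a b => hcomm k l a.toAdd b.toAdd).comp
      (MulEquiv.piMultiplicative fun _ => A).toMonoidHom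

lemma additiveProd_single [DecidableEq ι] (f : ι → A → G) (hadd) (hcomm) (k : ι) (a : A) :
    additiveProd f hadd hcomm (ofAdd (Pi.single k a)) = f k a := by
  have : MulEquiv.piMultiplicative (fun _ => A) (ofAdd (Pi.single k a)) =
      Pi.mulSingle k (ofAdd a) := by
    funext l
    rcases eq_or_ne l k with rfl | hl
    · simp
    · simp [hl]
  rw [additiveProd, MonoidHom.comp_apply, MulEquiv.coe_toMonoidHom, this]
  exact MonoidHom.noncommPiCoprod_mulSingle _ _ _

end AdditiveProd

section Presentation

variable {n : ℕ} {B : Type} [CommRing B]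

/-- The generator `x_{ij}(r)`, extended by the junk value `1` to `i = j`. -/
def x (i j : Fin n) (r : B) : SteinbergGroup n B :=
  if h : i ≠ j then stx n B i j h r else 1

lemma x_of_ne {i j : Fin n} (h : i ≠ j) (r : B) : x i j r = stx n B i j h r := dif_pos h

lemma x_self (i : Fin n) (r : B) : x i i r = 1 := by simp [x]

lemma x_add (i j : Fin n) (r s : B) : x i j (r + s) = x i j r * x i j s := by
  rcases eq_or_ne i j with rfl | h
  · simp [x_self]
  · have := PresentedGroup.one_of_mem (rels := {w | StRels n B w}) (StRels.add i j h r s)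
    rw [map_mul, map_mul, map_inv] at this
    rw [x_of_ne h, x_of_ne h, x_of_ne h]
    exact (mul_inv_eq_one.1 this).symm

lemma x_commute {i j h k : Fin n} (hjh : j ≠ h) (hik : i ≠ k) (r s : B) :
    Commute (x i j r) (x h k s) := by
  rcases eq_or_ne i j with rfl | hij
  · simp [x_self]
  rcases eq_or_ne h k with rfl | hhk
  · simp [x_self]
  have := PresentedGroup.one_of_mem (rels := {w | StRels n B w})
    (StRels.commZero i j h k hij hhk hjh hik r s)
  rw [map_commutatorElement, commutatorElement_eq_one_iff_commute] at this
  rw [x_of_ne hij, x_of_ne hhk]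
  exact this

lemma commutatorElement_x_x {i j k : Fin n} (hij : i ≠ j) (hjk : j ≠ k) (hik : i ≠ k) (r s : B) :
    ⁅x i j r, x j k s⁆ = x i k (r * s) := by
  have := PresentedGroup.one_of_mem (rels := {w | StRels n B w})
    (StRels.commAdd i j k hij hjk hik r s)
  rw [map_mul, map_commutatorElement, map_inv, mul_inv_eq_one] at this
  rw [x_of_ne hij, x_of_ne hjk, x_of_ne hik]
  exact this

lemma x_zero (i j : Fin n) : x i j (0 : B) = 1 := by
  simpa using x_add i j (0 : B) 0

lemma x_neg (i j : Fin n) (r : B) : x i j (-r) = (x i j r)⁻¹ := by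
  rw [eq_inv_iff_mul_eq_one, ← x_add, neg_add_cancel, x_zero]

lemma x_induction {p : SteinbergGroup n B → Prop} (g : SteinbergGroup n B) (one : p 1)
    (mul : ∀ a b, p a → p b → p (a * b)) (x : ∀ i j, i ≠ j → ∀ r, p (x i j r)) : p g := by
  refine PresentedGroup.induction_on g fun w => ?_
  induction w using FreeGroup.induction_on with
  | C1 => simpa using one
  | of a =>
    obtain ⟨⟨⟨i, j⟩, h⟩, r⟩ := a
    have := x i j h r
    rwa [x_of_ne h] at this
  | inv_of a _ =>
    obtain ⟨⟨⟨i, j⟩, h⟩, r⟩ := a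
    have := x i j h (-r)
    rwa [x_neg, x_of_ne h] at this
  | mul a b ha hb => rw [map_mul]; exact mul _ _ ha hb

section Lift

variable {G : Type*} [Group G] (f : (i j : Fin n) → i ≠ j → B → G)

/-- The Steinberg relations for a family `f i j : B → G`, indexed by `i ≠ j`, of elements of a
group. -/
structure IsSteinbergFamily : Prop where
  add : ∀ i j h r s, f i j h (r + s) = f i j h r * f i j h s
  commute : ∀ i j h k hij hhk, j ≠ h → i ≠ k → ∀ r s, Commute (f i j hij r) (f h k hhk s)
  commutatorElement : ∀ i j k hij hjk hik r s, ⁅f i j hij r, f j k hjk s⁆ = f i k hik (r * s)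

variable {f} in
lemma IsSteinbergFamily.lift_eq_one (hf : IsSteinbergFamily f) :
    ∀ w ∈ {w | StRels n B w},
      FreeGroup.lift (fun g : StGen n B => f g.1.1.1 g.1.1.2 g.1.2 g.2) w = 1 := by
  rintro w (⟨i, j, h, r, s⟩ | ⟨i, j, h, k, hij, hhk, hjh, hik, r, s⟩ |
    ⟨i, j, k, hij, hjk, hik, r, s⟩)
  · simp [hf.add]
  · simpa [commutatorElement_eq_one_iff_commute] using hf.commute i j h k hij hhk hjh hik r s
  · simpa [mul_inv_eq_one] using hf.commutatorElement i j k hij hjk hik r s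

/-- The universal property of the Steinberg group. -/
def lift (hf : IsSteinbergFamily f) : SteinbergGroup n B →* G :=
  PresentedGroup.toGroup hf.lift_eq_one

lemma lift_x (hf : IsSteinbergFamily f) {i j : Fin n} (h : i ≠ j) (r : B) :
    lift f hf (x i j r) = f i j h r := by
  rw [x_of_ne h]
  exact PresentedGroup.toGroup.of hf.lift_eq_one

end Lift

lemma hom_ext {G : Type*} [Group G] {φ ψ : SteinbergGroup n B →* G}
    (h : ∀ i j, i ≠ j → ∀ r, φ (x i j r) = ψ (x i j r)) : φ = ψ :=
  MonoidHom.ext fun g => x_induction (p := fun g => φ g = ψ g) g (by simp)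
    (fun a b ha hb => by simp [ha, hb]) h

/-- The contragredient endomorphism `x_{ij}(r) ↦ x_{ji}(-r)`, covering `g ↦ (gᵀ)⁻¹`. It exchanges
rows and columns. -/
def contragredient : SteinbergGroup n B →* SteinbergGroup n B :=
  lift (fun i j _ r => x j i (-r))
    { add := fun i j _ r s => by rw [neg_add, x_add]
      commute := fun i j h k _ _ hjh hik r s => x_commute hik hjh _ _
      commutatorElement := fun i j k hij hjk hik r s => by
        rw [← commutatorElement_inv, commutatorElement_x_x hjk.symm hij.symm hik.symm, ← x_neg]
        congr 1; ring }

lemma contragredient_x (i j : Fin n) (r : B) : contragredient (x i j r) = x j i (-r) := by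
  rcases eq_or_ne i j with rfl | h
  · simp [x_self]
  · exact lift_x _ _ h r

end Presentation

section RowCol

variable {n : ℕ} {B : Type} [CommRing B] {i j : Fin n}

lemma x_commute_x_same_left (i k l : Fin n) (r s : B) : Commute (x i k r) (x i l s) := by
  rcases eq_or_ne k i with rfl | hk
  · simp [x_self]
  rcases eq_or_ne l i with rfl | hl
  · simp [x_self]
  exact x_commute hk hl.symm r s

/-- The product `∏ₖ x_{ik}(vₖ)` over `k ≠ i`; the entry `v i` is ignored. -/
def row (i : Fin n) (v : Fin n → B) : SteinbergGroup n B :=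
  additiveProd (x i) (x_add i) (x_commute_x_same_left i) (ofAdd v)

lemma row_add (i : Fin n) (v w : Fin n → B) : row i (v + w) = row i v * row i w := map_mul _ _ _

lemma row_zero (i : Fin n) : row i (0 : Fin n → B) = 1 := map_one _

lemma row_neg (i : Fin n) (v : Fin n → B) : row i (-v) = (row i v)⁻¹ := map_inv _ _

lemma row_single (i k : Fin n) (r : B) : row i (Pi.single k r) = x i k r :=
  additiveProd_single _ _ _ _ _

/-- The product `∏ₖ x_{ki}(vₖ)` over `k ≠ i`; the entry `v i` is ignored. -/
def col (i : Fin n) (v : Fin n → B) : SteinbergGroup n B :=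
  contragredient (row i (-v))

lemma col_add (i : Fin n) (v w : Fin n → B) : col i (v + w) = col i v * col i w := by
  rw [col, neg_add, row_add, map_mul, col, col]

lemma col_zero (i : Fin n) : col i (0 : Fin n → B) = 1 := by
  rw [col, neg_zero, row_zero, map_one]

lemma col_neg (i : Fin n) (v : Fin n → B) : col i (-v) = (col i v)⁻¹ := by
  rw [col, row_neg, map_inv, col]

lemma col_single (i k : Fin n) (r : B) : col i (Pi.single k r) = x k i r := by
  rw [col, ← Pi.single_neg, row_single, contragredient_x, neg_neg]

lemma row_commute_of_x_commute (i : Fin n) {v : Fin n → B} {g : SteinbergGroup n B}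
    (h : ∀ k, v k ≠ 0 → Commute (x i k (v k)) g) : Commute (row i v) g := by
  rw [← Finset.univ_sum_single v]
  refine Finset.sum_induction _ (fun w => Commute (row i w) g) ?_ ?_ ?_
  · intro v w hv hw
    rw [row_add]
    exact hv.mul_left hw
  · simp [row_zero]
  · intro k _
    rw [row_single]
    rcases eq_or_ne (v k) 0 with hk | hk
    · simp [hk, x_zero]
    · exact h k hk

lemma row_commute_row {v w : Fin n → B} (hv : v j = 0) (hw : w i = 0) :
    Commute (row i v) (row j w) := by
  refine row_commute_of_x_commute i fun k hk => (row_commute_of_x_commute j fun l hl => ?_).symm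
  exact x_commute (by rintro rfl; exact hl hw) (by rintro rfl; exact hk hv) _ _

lemma x_commute_row (i j : Fin n) (t : B) (v : Fin n → B) : Commute (x i j t) (row i v) :=
  (row_commute_of_x_commute i fun k _ => x_commute_x_same_left i k j _ t).symm

lemma x_commute_col (i j : Fin n) (t : B) (v : Fin n → B) : Commute (x i j t) (col j v) := by
  simpa [contragredient_x, col] using (x_commute_row j i (-t) (-v)).map contragredient

lemma conj_x_row_of_ne {r s : Fin n} (hr : r ≠ i) (hs : s ≠ i) (hrs : r ≠ s) (t : B)
    (v : Fin n → B) : conj (x r s t) (row i v) = row i (v + Pi.single s (-(t * v r))) := by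
  induction v using Pi.single_induction with
  | zero => simp [row_zero]
  | add v w hv hw =>
    rw [row_add, map_mul, hv, hw, ← row_add]
    congr 1
    simp only [Pi.add_apply, mul_add, neg_add, Pi.single_add]
    abel
  | single k a =>
    rw [row_add, row_single, row_single]
    rcases eq_or_ne k r with rfl | hk
    · rw [conj_eq_commutatorElement_mul, ← commutatorElement_inv,
        commutatorElement_x_x hr.symm hrs hs.symm, ← x_neg, Pi.single_eq_same, mul_comm t,
        (x_commute_x_same_left _ _ _ _ _).eq]
    · rw [Pi.single_eq_of_ne hk.symm, mul_zero, neg_zero, x_zero, mul_one,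
        conj_eq_self_iff.2 (x_commute hs hk.symm _ _)]

lemma conj_x_col_of_ne {r s : Fin n} (hr : r ≠ i) (hs : s ≠ i) (hrs : r ≠ s) (t : B)
    (v : Fin n → B) : conj (x r s t) (col i v) = col i (v + Pi.single r (t * v s)) := by
  have := congrArg contragredient (conj_x_row_of_ne hs hr hrs.symm (-t) (-v))
  simpa [contragredient_x, col, x_neg, ← Pi.single_neg, add_comm] using this

lemma conj_x_row {t : B} {v : Fin n → B} (hij : i ≠ j) (hi : v i = 0) (hj : v j = 0) :
    conj (x j i t) (row i v) = row j (t • v) * row i v := by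
  refine single_induction_of_eq_zero {i, j}
    (p := fun v => conj (x j i t) (row i v) = row j (t • v) * row i v) v
    (by simp [hi, hj]) (by simp [row_zero]) ?_ ?_
  · intro v w hv hw ihv ihw
    simp only [Set.mem_insert_iff, Set.mem_singleton_iff, forall_eq_or_imp, forall_eq] at hv hw
    have : Commute (row i v) (row j (t • w)) := row_commute_row hv.2 (by simp [hw.1])
    rw [row_add, map_mul, ihv, ihw, smul_add, row_add, mul_assoc, ← mul_assoc (row i v), this.eq]
    simp only [mul_assoc]
  · intro k hk a
    simp only [Set.mem_insert_iff, Set.mem_singleton_iff, not_or] at hk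
    rw [← Pi.single_smul, row_single, row_single, smul_eq_mul, conj_eq_commutatorElement_mul,
      commutatorElement_x_x hij.symm (Ne.symm hk.1) (Ne.symm hk.2)]

lemma commutatorElement_x_row {t : B} {v : Fin n → B} (hij : i ≠ j) (hi : v i = 0)
    (hj : v j = 0) : ⁅x j i t, row i v⁆ = row j (t • v) := by
  rw [← mul_left_inj (row i v), ← conj_eq_commutatorElement_mul, conj_x_row hij hi hj]

lemma commutatorElement_col_x {t : B} {u : Fin n → B} (hij : i ≠ j) (hi : u i = 0)
    (hj : u j = 0) : ⁅col i u, x i j t⁆ = col j (t • u) := by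
  have := congrArg contragredient
    (conj_x_row (t := -t) (v := -u) hij (by simp [hi]) (by simp [hj]))
  have : conj (x i j t) (col i u) = col j (-(t • u)) * col i u := by
    simpa [contragredient_x, col, x_neg] using this
  rw [conj_eq_commutatorElement_mul, mul_left_inj, col_neg] at this
  rw [← commutatorElement_inv, this, inv_inv]

lemma conj_row_col {v u : Fin n → B} (hij : i ≠ j) (hv : v i = 0) (hu : u j = 0) :
    conj (row i v) (col j u) = x i j (v ⬝ᵥ u) * col j u := by
  refine single_induction_of_eq_zero {i}
    (p := fun v => conj (row i v) (col j u) = x i j (v ⬝ᵥ u) * col j u) v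
    (by simp [hv]) (by simp [row_zero, x_zero]) ?_ ?_
  · intro v w _ _ ihv ihw
    rw [row_add, map_mul, mul_apply, ihw, map_mul, ihv,
      conj_eq_self_iff.2 (x_commute_row _ _ _ _).symm, add_dotProduct, add_comm, x_add, mul_assoc]
  · intro k hk a
    rw [row_single, single_dotProduct]
    rcases eq_or_ne k j with rfl | hkj
    · rw [hu, mul_zero, x_zero, one_mul, conj_eq_self_iff.2 (x_commute_col _ _ _ _)]
    · rw [conj_x_col_of_ne hij hkj (Ne.symm hk), add_comm, col_add, col_single]

lemma row_commute_col {v u : Fin n → B} (hij : i ≠ j) (hv : v i = 0) (hu : u j = 0)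
    (h : v ⬝ᵥ u = 0) : Commute (row i v) (col j u) := by
  rw [← conj_eq_self_iff, conj_row_col hij hv hu, h, x_zero, one_mul]

lemma conj_row_row {v : Fin n → B} (hij : i ≠ j) (hi : v i = 0) (hj : v j = 0) (w : Fin n → B) :
    conj (row i w) (row j v) = row i (w j • v) * row j v := by
  induction w using Pi.single_induction with
  | zero => simp [row_zero]
  | add w w' hw hw' =>
    have : Commute (row i w) (row i (w' j • v)) :=
      row_commute_of_x_commute i fun k _ => x_commute_row _ _ _ _
    rw [row_add, map_mul, mul_apply, hw', map_mul, hw, conj_eq_self_iff.2 this, Pi.add_apply,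
      add_comm, add_smul, row_add, mul_assoc]
  | single k a =>
    rcases eq_or_ne k j with rfl | hkj
    · rw [row_single, conj_x_row hij.symm hj hi, Pi.single_eq_same]
    · rw [Pi.single_eq_of_ne hkj.symm, zero_smul, row_zero, one_mul, conj_eq_self_iff]
      exact row_commute_row (by simp [hkj.symm]) hi

end RowCol

section EraseTwo

variable {ι B : Type*} [DecidableEq ι] [CommRing B] {i j : ι}

/-- The vector `u` with its entries at `i` and `j` replaced by `0`. -/
def eraseTwo (i j : ι) (u : ι → B) : ι → B := Function.update (Function.update u i 0) j 0

lemma eraseTwo_left (i j : ι) (u : ι → B) : eraseTwo i j u i = 0 := by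
  simp [eraseTwo, Function.update_apply]

lemma eraseTwo_right (i j : ι) (u : ι → B) : eraseTwo i j u j = 0 := by simp [eraseTwo]

lemma eraseTwo_comm (i j : ι) (u : ι → B) : eraseTwo i j u = eraseTwo j i u := by
  funext k
  simp only [eraseTwo, Function.update_apply]
  split_ifs <;> rfl

lemma eraseTwo_smul (i j : ι) (s : B) (u : ι → B) : eraseTwo i j (s • u) = s • eraseTwo i j u := by
  funext k
  simp [eraseTwo, Function.update_apply]

lemma eraseTwo_add_single_left (i j : ι) (u : ι → B) (a : B) :
    eraseTwo i j (u + Pi.single i a) = eraseTwo i j u := by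
  funext k
  simp only [eraseTwo, Pi.add_apply, Function.update_apply, Pi.single_apply]
  split_ifs <;> simp

lemma eraseTwo_add_single_add_single (hij : i ≠ j) (u : ι → B) :
    eraseTwo i j u + Pi.single i (u i) + Pi.single j (u j) = u := by
  funext k
  simp only [eraseTwo, Pi.add_apply, Function.update_apply, Pi.single_apply]
  split_ifs <;> simp_all

lemma dotProduct_eraseTwo_add [Fintype ι] (hij : i ≠ j) (v u : ι → B) :
    v ⬝ᵥ eraseTwo i j u + v i * u i + v j * u j = v ⬝ᵥ u := by
  conv_rhs => rw [← eraseTwo_add_single_add_single hij u]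
  simp [dotProduct_add]

lemma dotProduct_eraseTwo_eq_zero [Fintype ι] (hij : i ≠ j) {v u : ι → B} (hi : v i = 0)
    (hj : v j = 0) (h : v ⬝ᵥ u = 0) : v ⬝ᵥ eraseTwo i j u = 0 := by
  simpa [hi, hj, h] using dotProduct_eraseTwo_add hij v u

end EraseTwo

section Transvec

variable {n : ℕ} {B : Type} [CommRing B] {i j : Fin n} {u v w z : Fin n → B}

/-- The commutator of a column and a row with the same index; for `v i = 0` and `v ⬝ᵥ u = 0` it
lifts the transvection `1 + u vᵀ` whenever `u i = 0`. -/
def colRow (i : Fin n) (u v : Fin n → B) : SteinbergGroup n B := ⁅col i u, row i v⁆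

lemma colRow_smul_left (hij : i ≠ j) (s : B) (hzi : z i = 0) (hzj : z j = 0) (hvi : v i = 0)
    (hvj : v j = 0) (hvz : v ⬝ᵥ z = 0) : colRow i (s • z) v = colRow j z (s • v) := by
  rw [colRow, colRow, ← commutatorElement_col_x hij.symm hzj hzi,
    ← commutatorElement_x_row hij hvi hvj]
  apply commutatorElement_assoc_of_commute
  · exact (row_commute_col hij hvi hzj hvz).symm
  · rw [commutatorElement_col_x hij.symm hzj hzi, commutatorElement_x_row hij hvi hvj]
    exact (row_commute_col hij.symm (by simp [hvj]) (by simp [hzi]) (by simp [hvz])).symm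
  · rw [commutatorElement_x_row hij hvi hvj]
    exact row_commute_row (by simp [hvi]) hvj

lemma colRow_eq_colRow (hij : i ≠ j) (hzi : z i = 0) (hzj : z j = 0) (hvi : v i = 0)
    (hvj : v j = 0) (hvz : v ⬝ᵥ z = 0) : colRow i z v = colRow j z v := by
  simpa using colRow_smul_left hij 1 hzi hzj hvi hvj hvz

lemma row_commute_colRow_of_ne (hij : i ≠ j) (hui : u i = 0) (hvj : v j = 0) (hwi : w i = 0)
    (hwj : w j = 0) (hwu : w ⬝ᵥ u = 0) : Commute (row j w) (colRow i u v) :=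
  commute_commutatorElement (row_commute_col hij.symm hwj hui hwu) (row_commute_row hwi hvj)

lemma row_mul_colRow_eraseTwo (hij : i ≠ j) (hvi : v i = 0) (hvj : v j = 0) (hvu : v ⬝ᵥ u = 0) :
    row j (u j • v) * colRow i (eraseTwo i j u) v = colRow i u v := by
  have hcol : col i (eraseTwo i j u) * x j i (u j) = col i u := by
    conv_rhs => rw [← eraseTwo_add_single_add_single hij u, col_add, col_add, col_single,
      col_single, x_self, mul_one]
  have hcomm : Commute (row j (u j • v)) (col i (eraseTwo i j u)) :=
    row_commute_col hij.symm (by simp [hvj]) (eraseTwo_left _ _ _)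
      (by simp [dotProduct_eraseTwo_eq_zero hij hvi hvj hvu])
  rw [colRow, colRow, ← hcol, commutatorElement_mul_left_eq_conj_mul,
    commutatorElement_x_row hij hvi hvj, ← conj_apply, conj_eq_self_iff.2 hcomm.symm]

lemma conj_row_colRow_of_ne (hij : i ≠ j) (hzj : z j = 0) (hvi : v i = 0) (hvj : v j = 0)
    (hwi : w i = 0) (hvz : v ⬝ᵥ z = 0) :
    conj (row i w) (colRow j z v) = row i ((w ⬝ᵥ z) • v) * colRow j z v := by
  have row_commute (s : B) : Commute (row i (s • v)) (col j z) :=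
    row_commute_col hij (by simp [hvi]) hzj (by simp [hvz])
  have x_comm := x_commute_col i j (w ⬝ᵥ z) z
  have row_comm : Commute (row i (w j • v)) (row j v) := row_commute_row (by simp [hvj]) hvi
  rw [colRow, map_commutatorElement, conj_row_col hij hwi hzj, conj_row_row hij hvi hvj, x_comm.eq,
    commutatorElement_mul_right_of_commute
      ((row_commute _).mul_right (x_commute_row _ _ _ _).symm) row_comm,
    commutatorElement_mul_left_eq_conj_mul, commutatorElement_x_row hij.symm hvj hvi, ← conj_apply,
    conj_eq_self_iff.2 (row_commute _).symm]

lemma row_commute_colRow (hij : i ≠ j) (hvi : v i = 0) (hvj : v j = 0) (hwi : w i = 0)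
    (hvu : v ⬝ᵥ u = 0) (hwu : w ⬝ᵥ u = 0) : Commute (row i w) (colRow i u v) := by
  have hvz := dotProduct_eraseTwo_eq_zero hij hvi hvj hvu
  have hwz : w ⬝ᵥ eraseTwo i j u = -(w j * u j) := by
    linear_combination dotProduct_eraseTwo_add hij w u - u i * hwi + hwu
  have row_comm : Commute (row i (-((w j * u j) • v))) (row j (u j • v)) :=
    row_commute_row (by simp [hvj]) (by simp [hvi])
  rw [← conj_eq_self_iff, ← row_mul_colRow_eraseTwo hij hvi hvj hvu, map_mul,
    conj_row_row hij (by simp [hvi]) (by simp [hvj]),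
    colRow_eq_colRow hij (eraseTwo_left _ _ _) (eraseTwo_right _ _ _) hvi hvj hvz,
    conj_row_colRow_of_ne hij (eraseTwo_right _ _ _) hvi hvj hwi hvz, hwz, neg_smul, smul_smul,
    mul_assoc, ← mul_assoc (row j _), ← row_comm.eq, row_neg]
  group

/-- The lift of the transvection `1 + u vᵀ`, where `v i = 0` and `v ⬝ᵥ u = 0`. -/
def transvec (i : Fin n) (u v : Fin n → B) : SteinbergGroup n B :=
  colRow i u v * row i (u i • v)

lemma transvec_zero (i : Fin n) (u : Fin n → B) : transvec i u 0 = 1 := by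
  simp [transvec, colRow, row_zero]

lemma transvec_eq_mul_mul (hij : i ≠ j) (hvi : v i = 0) (hvj : v j = 0) (hvu : v ⬝ᵥ u = 0) :
    transvec i u v = row j (u j • v) * colRow i (eraseTwo i j u) v * row i (u i • v) := by
  rw [transvec, row_mul_colRow_eraseTwo hij hvi hvj hvu]

lemma transvec_eq_transvec (hvi : v i = 0) (hvj : v j = 0) (hvu : v ⬝ᵥ u = 0) :
    transvec i u v = transvec j u v := by
  rcases eq_or_ne i j with rfl | hij
  · rfl
  have hvz := dotProduct_eraseTwo_eq_zero hij hvi hvj hvu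
  have swap := colRow_eq_colRow hij (eraseTwo_left _ _ u) (eraseTwo_right _ _ _) hvi hvj hvz
  have commute_j : Commute (row j (u j • v)) (colRow i (eraseTwo i j u) v) :=
    row_commute_colRow_of_ne hij (eraseTwo_left _ _ _) hvj (by simp [hvi]) (by simp [hvj])
      (by simp [hvz])
  have commute_i : Commute (row i (u i • v)) (colRow i (eraseTwo i j u) v) := by
    rw [swap]
    exact row_commute_colRow_of_ne hij.symm (eraseTwo_right _ _ _) hvi (by simp [hvj])
      (by simp [hvi]) (by simp [hvz])
  have row_comm : Commute (row i (u i • v)) (row j (u j • v)) :=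
    row_commute_row (by simp [hvj]) (by simp [hvi])
  rw [transvec_eq_mul_mul hij hvi hvj hvu, transvec_eq_mul_mul hij.symm hvj hvi hvu,
    ← eraseTwo_comm i j, ← swap, mul_assoc, ← commute_i.eq, ← mul_assoc, ← row_comm.eq, mul_assoc,
    commute_j.eq, mul_assoc]

lemma transvec_add (hij : i ≠ j) (hvi : v i = 0) (hwi : w i = 0) (hwj : w j = 0)
    (hvu : v ⬝ᵥ u = 0) (hwu : w ⬝ᵥ u = 0) :
    transvec i u (v + w) = transvec i u v * transvec i u w := by
  have hcomm : Commute (row i v) (colRow i u w) := row_commute_colRow hij hwi hwj hvi hwu hvu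
  have hcomm' : Commute (row i (u i • v)) (colRow i u w) :=
    row_commute_colRow hij hwi hwj (by simp [hvi]) hwu (by simp [hvu])
  have colRow_add : colRow i u (v + w) = colRow i u v * colRow i u w := by
    rw [colRow, row_add, commutatorElement_mul_right_eq_mul_conj, ← colRow, ← colRow,
      mul_assoc (colRow i u v), hcomm.eq, ← mul_assoc, mul_inv_cancel_right]
  rw [transvec, transvec, transvec, colRow_add, smul_add, row_add, mul_assoc, mul_assoc,
    ← mul_assoc (colRow i u w), ← hcomm'.eq, mul_assoc]

lemma transvec_smul_left (hij : i ≠ j) (s : B) (hvi : v i = 0) (hvj : v j = 0)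
    (hvu : v ⬝ᵥ u = 0) : transvec i (s • u) v = transvec i u (s • v) := by
  have hvz := dotProduct_eraseTwo_eq_zero hij hvi hvj hvu
  rw [transvec_eq_mul_mul hij hvi hvj (by simp [hvu]),
    transvec_eq_mul_mul hij (by simp [hvi]) (by simp [hvj]) (by simp [hvu]), eraseTwo_smul,
    colRow_smul_left hij s (eraseTwo_left _ _ _) (eraseTwo_right _ _ _) hvi hvj hvz,
    colRow_eq_colRow hij (eraseTwo_left _ _ _) (eraseTwo_right _ _ _) (by simp [hvi])
      (by simp [hvj]) (by simp [hvz])]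
  simp only [Pi.smul_apply, smul_smul, smul_eq_mul, mul_comm s]

lemma conj_x_transvec_of_ne {r s : Fin n} (hr : r ≠ i) (hs : s ≠ i) (hrs : r ≠ s) (t : B)
    (u v : Fin n → B) : conj (x r s t) (transvec i u v) =
      transvec i (u + Pi.single r (t * u s)) (v + Pi.single s (-(t * v r))) := by
  have hsmul : u i • v + Pi.single s (-(t * (u i • v) r)) =
      u i • (v + Pi.single s (-(t * v r))) := by
    rw [smul_add, ← Pi.single_smul, Pi.smul_apply, smul_eq_mul, smul_eq_mul]
    ring_nf
  rw [transvec, colRow, map_mul, map_commutatorElement, conj_x_col_of_ne hr hs hrs,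
    conj_x_row_of_ne hr hs hrs, conj_x_row_of_ne hr hs hrs, hsmul, transvec, colRow, Pi.add_apply,
    Pi.single_eq_of_ne hr.symm, add_zero]

lemma conj_x_transvec (hij : i ≠ j) (t : B) (hvi : v i = 0) (hvj : v j = 0) (hvu : v ⬝ᵥ u = 0) :
    conj (x i j t) (transvec i u v) = transvec i (u + Pi.single i (t * u j)) v := by
  have hvz := dotProduct_eraseTwo_eq_zero hij hvi hvj hvu
  have x_comm : Commute (x i j t) (colRow i (eraseTwo i j u) v) := by
    rw [← row_single]
    exact row_commute_colRow hij hvi hvj (by simp [hij]) hvz (by simp [eraseTwo_right])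
  have row_comm : Commute (row i ((t * u j) • v))
      (row j (u j • v) * colRow i (eraseTwo i j u) v) :=
    (row_commute_row (by simp [hvj]) (by simp [hvi])).mul_right
      (row_commute_colRow hij hvi hvj (by simp [hvi]) hvz (by simp [hvz]))
  rw [transvec_eq_mul_mul hij hvi hvj hvu,
    transvec_eq_mul_mul hij hvi hvj (by simp [dotProduct_add, hvu, hvi]), map_mul, map_mul,
    conj_x_row hij.symm (by simp [hvj]) (by simp [hvi]), conj_eq_self_iff.2 x_comm,
    conj_eq_self_iff.2 (x_commute_row _ _ _ _), smul_smul, mul_assoc (row i _), row_comm.eq,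
    mul_assoc, ← row_add, ← add_smul, eraseTwo_add_single_left]
  simp [hij.symm, add_comm]

end Transvec

section KoszulVec

variable {ι B : Type*} [DecidableEq ι] [CommRing B]

/-- The Koszul relation `c (uₗ eₖ - uₖ eₗ)` among the entries of `u`. -/
def koszulVec (u : ι → B) (k l : ι) (c : B) : ι → B :=
  Pi.single k (c * u l) + Pi.single l (-(c * u k))

lemma koszulVec_dotProduct [Fintype ι] (u : ι → B) (k l : ι) (c : B) (w : ι → B) :
    koszulVec u k l c ⬝ᵥ w = c * (u l * w k - u k * w l) := by
  simp only [koszulVec, add_dotProduct, single_dotProduct]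
  ring

lemma koszulVec_dotProduct_self [Fintype ι] (u : ι → B) (k l : ι) (c : B) :
    koszulVec u k l c ⬝ᵥ u = 0 := by
  rw [koszulVec_dotProduct]
  ring

lemma koszulVec_of_ne (u : ι → B) {k l i : ι} (c : B) (hk : i ≠ k) (hl : i ≠ l) :
    koszulVec u k l c i = 0 := by
  simp [koszulVec, hk, hl]

lemma koszulVec_add (u : ι → B) (k l : ι) (c d : B) :
    koszulVec u k l (c + d) = koszulVec u k l c + koszulVec u k l d := by
  simp only [koszulVec, add_mul, neg_add, Pi.single_add]
  abel

lemma koszulVec_swap (u : ι → B) (k l : ι) (c : B) :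
    koszulVec u l k c = koszulVec u k l (-c) := by
  simp only [koszulVec, neg_mul, neg_neg, add_comm]

lemma koszulVec_self (u : ι → B) (k : ι) (c : B) : koszulVec u k k c = 0 := by
  rw [koszulVec, ← Pi.single_add, add_neg_cancel, Pi.single_zero]

lemma koszulVec_zero (u : ι → B) (k l : ι) : koszulVec u k l 0 = 0 := by simp [koszulVec]

lemma koszulVec_mul (u : ι → B) (k l : ι) (s c : B) :
    koszulVec u k l (s * c) = s • koszulVec u k l c := by
  simp only [koszulVec, smul_add, ← Pi.single_smul, smul_eq_mul, mul_assoc, mul_neg]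

lemma koszulVec_smul (s : B) (u : ι → B) (k l : ι) (c : B) :
    koszulVec (s • u) k l c = s • koszulVec u k l c := by
  rw [← koszulVec_mul]
  simp only [koszulVec, Pi.smul_apply, smul_eq_mul, mul_left_comm, mul_assoc]

end KoszulVec

section KoszulElt

variable {n : ℕ} [Fact (4 ≤ n)] {B : Type} [CommRing B] {k l p q i : Fin n}

lemma exists_ne_ne_ne (k l m : Fin n) : ∃ i, i ≠ k ∧ i ≠ l ∧ i ≠ m := by
  have : ({k, l, m} : Finset (Fin n)).card < (Finset.univ : Finset (Fin n)).card := by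
    rw [Finset.card_fin]
    exact Finset.card_le_three.trans_lt (Fact.out : 4 ≤ n)
  obtain ⟨i, -, hi⟩ := Finset.exists_mem_notMem_of_card_lt_card this
  exact ⟨i, by simpa using hi⟩

/-- The lift of `1 + u (koszulVec u k l c)ᵀ`; by `koszulElt_eq_transvec` it does not depend on
the auxiliary index, which exists because `4 ≤ n`. -/
noncomputable def koszulElt (u : Fin n → B) (k l : Fin n) (c : B) : SteinbergGroup n B :=
  transvec (exists_ne_ne_ne k l l).choose u (koszulVec u k l c)

lemma koszulElt_eq_transvec (u : Fin n → B) (c : B) (hk : i ≠ k) (hl : i ≠ l) :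
    koszulElt u k l c = transvec i u (koszulVec u k l c) :=
  have h := (exists_ne_ne_ne k l l).choose_spec
  transvec_eq_transvec (koszulVec_of_ne _ _ h.1 h.2.1) (koszulVec_of_ne _ _ hk hl)
    (koszulVec_dotProduct_self _ _ _ _)

lemma transvec_add_koszulVec {u v : Fin n → B} (c : B) (hk : i ≠ k) (hl : i ≠ l) (hv : v i = 0)
    (hvu : v ⬝ᵥ u = 0) :
    transvec i u (v + koszulVec u k l c) = transvec i u v * koszulElt u k l c := by
  obtain ⟨j, hjk, hjl, hji⟩ := exists_ne_ne_ne k l i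
  rw [transvec_add hji.symm hv (koszulVec_of_ne _ _ hk hl) (koszulVec_of_ne _ _ hjk hjl) hvu
    (koszulVec_dotProduct_self _ _ _ _), koszulElt_eq_transvec u c hk hl]

lemma koszulElt_add (u : Fin n → B) (k l : Fin n) (c d : B) :
    koszulElt u k l (c + d) = koszulElt u k l c * koszulElt u k l d := by
  obtain ⟨i, hk, hl, -⟩ := exists_ne_ne_ne k l l
  rw [koszulElt_eq_transvec u (c + d) hk hl, koszulVec_add, transvec_add_koszulVec d hk hl
    (koszulVec_of_ne _ _ hk hl) (koszulVec_dotProduct_self _ _ _ _),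
    koszulElt_eq_transvec u c hk hl]

lemma koszulElt_zero (u : Fin n → B) (k l : Fin n) : koszulElt u k l 0 = 1 := by
  rw [koszulElt, koszulVec_zero, transvec_zero]

lemma koszulElt_neg (u : Fin n → B) (k l : Fin n) (c : B) :
    koszulElt u k l (-c) = (koszulElt u k l c)⁻¹ := by
  rw [eq_inv_iff_mul_eq_one, ← koszulElt_add, neg_add_cancel, koszulElt_zero]

lemma koszulElt_self (u : Fin n → B) (k : Fin n) (c : B) : koszulElt u k k c = 1 := by
  rw [koszulElt, koszulVec_self, transvec_zero]

lemma koszulElt_swap (u : Fin n → B) (k l : Fin n) (c : B) :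
    koszulElt u l k c = koszulElt u k l (-c) := by
  obtain ⟨i, hk, hl, -⟩ := exists_ne_ne_ne k l l
  rw [koszulElt_eq_transvec u c hl hk, koszulElt_eq_transvec u (-c) hk hl, koszulVec_swap]

lemma koszulElt_smul (s : B) (u : Fin n → B) (k l : Fin n) (c : B) :
    koszulElt (s • u) k l c = koszulElt u k l (s * s * c) := by
  obtain ⟨i, hik, hil, -⟩ := exists_ne_ne_ne k l l
  obtain ⟨j, hjk, hjl, hji⟩ := exists_ne_ne_ne k l i
  rw [koszulElt_eq_transvec _ _ hik hil, koszulElt_eq_transvec _ _ hik hil,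
    transvec_smul_left hji.symm s (koszulVec_of_ne _ _ hik hil) (koszulVec_of_ne _ _ hjk hjl),
    koszulVec_smul, koszulVec_mul, mul_smul]
  rw [koszulVec_smul, smul_dotProduct, koszulVec_dotProduct_self, smul_zero]

lemma koszulElt_mul_koszulElt_mul_koszulElt (u : Fin n → B) (k l m : Fin n) (d : B) :
    koszulElt u k l (d * u m) * koszulElt u l m (d * u k) * koszulElt u m k (d * u l) = 1 := by
  obtain ⟨i, hk, hl, hm⟩ := exists_ne_ne_ne k l m
  have koszulVec_sum : koszulVec u k l (d * u m) + koszulVec u l m (d * u k) +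
      koszulVec u m k (d * u l) = 0 := by
    simp only [koszulVec, Pi.single_neg]
    rw [mul_right_comm d (u k) (u m), mul_right_comm d (u l) (u k), mul_right_comm d (u l) (u m)]
    abel
  rw [koszulElt_eq_transvec u _ hk hl, ← transvec_add_koszulVec _ hl hm (koszulVec_of_ne _ _ hk hl)
      (koszulVec_dotProduct_self _ _ _ _), ← transvec_add_koszulVec _ hm hk, koszulVec_sum,
    transvec_zero]
  · simp [koszulVec_of_ne, hk, hl, hm]
  · simp [add_dotProduct, koszulVec_dotProduct_self]

lemma koszulElt_commute_of_ne (u : Fin n → B) (c d : B) (hk : i ≠ k) (hl : i ≠ l) (hp : i ≠ p)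
    (hq : i ≠ q) : Commute (koszulElt u k l c) (koszulElt u p q d) := by
  have hkl := transvec_add_koszulVec c hk hl (koszulVec_of_ne _ d hp hq)
    (koszulVec_dotProduct_self u _ _ _)
  have hpq := transvec_add_koszulVec d hp hq (koszulVec_of_ne _ c hk hl)
    (koszulVec_dotProduct_self u _ _ _)
  rw [← koszulElt_eq_transvec u _ hp hq] at hkl
  rw [← koszulElt_eq_transvec u _ hk hl] at hpq
  rw [Commute, SemiconjBy, ← hkl, ← hpq, add_comm]

lemma conj_x_koszulElt_of_ne (u : Fin n → B) {r s : Fin n} (t c : B) (hrs : r ≠ s) (hk : r ≠ k)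
    (hl : r ≠ l) :
    conj (x r s t) (koszulElt u k l c) = koszulElt (u + Pi.single r (t * u s)) k l c := by
  have hvec : koszulVec (u + Pi.single r (t * u s)) k l c = koszulVec u k l c := by
    simp [koszulVec, hk.symm, hl.symm]
  by_cases hs : s = k ∨ s = l
  · obtain ⟨i, hik, hil, hir⟩ := exists_ne_ne_ne k l r
    have his : s ≠ i := by rcases hs with rfl | rfl <;> [exact hik.symm; exact hil.symm]
    rw [koszulElt_eq_transvec _ _ hik hil, koszulElt_eq_transvec _ _ hik hil,
      conj_x_transvec_of_ne hir.symm his hrs, hvec, koszulVec_of_ne _ _ hk hl]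
    simp
  · push Not at hs
    rw [koszulElt_eq_transvec _ _ hk hl, koszulElt_eq_transvec _ _ hk hl, hvec,
      conj_x_transvec hrs t (koszulVec_of_ne _ _ hk hl) (koszulVec_of_ne _ _ hs.1 hs.2)
        (koszulVec_dotProduct_self _ _ _ _)]

lemma conj_x_koszulElt (u : Fin n → B) {s : Fin n} (t c : B) (hks : k ≠ s) (hkl : k ≠ l) :
    conj (x k s t) (koszulElt u k l c) = koszulElt (u + Pi.single k (t * u s)) k l c *
      koszulElt (u + Pi.single k (t * u s)) s l (-(t * c)) := by
  obtain ⟨i, hik, hil, his⟩ := exists_ne_ne_ne k l s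
  rw [koszulElt_eq_transvec _ _ hik hil, conj_x_transvec_of_ne hik.symm his.symm hks,
    koszulElt_eq_transvec _ _ hik hil,
    ← transvec_add_koszulVec _ his hil (koszulVec_of_ne _ _ hik hil)
      (koszulVec_dotProduct_self _ _ _ _)]
  congr 1
  simp only [koszulVec, Pi.add_apply, Pi.single_eq_same, Pi.single_eq_of_ne hkl.symm,
    Pi.single_eq_of_ne hkl, Pi.single_eq_of_ne hks.symm, add_zero]
  rw [add_assoc, add_assoc, add_left_comm (Pi.single l _), ← Pi.single_add,
    add_comm (Pi.single l _)]
  ring_nf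

end KoszulElt

section Commute

variable {n : ℕ} [Fact (4 ≤ n)] {B : Type} [CommRing B] {k l p q : Fin n}

lemma conj_col_koszulElt_same (u : Fin n → B) {z : Fin n → B} (d : B) (hzp : z p = 0)
    (hzq : z q = 0) :
    conj (col p z) (koszulElt u p q d) = koszulElt (u + u p • z) p q d := by
  refine single_induction_of_eq_zero {p, q}
    (p := fun z => ∀ u : Fin n → B, conj (col p z) (koszulElt u p q d) =
      koszulElt (u + u p • z) p q d) z (by simp [hzp, hzq]) (by simp [col_zero]) ?_ ?_ u
  · intro z w _ hw ihz ihw u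
    rw [col_add, map_mul, mul_apply, ihw, ihz]
    simp [hw p, smul_add, add_assoc, add_comm (u p • z)]
  · intro r hr a u
    simp only [Set.mem_insert_iff, Set.mem_singleton_iff, not_or] at hr
    rw [col_single, conj_x_koszulElt_of_ne u a d hr.1 hr.1 hr.2, ← Pi.single_smul, smul_eq_mul,
      mul_comm a]

lemma conj_col_koszulElt (u : Fin n → B) {z : Fin n → B} (c : B) (hkp : k ≠ p) (hkq : k ≠ q)
    (hzp : z p = 0) (hzq : z q = 0) :
    conj (col p z) (koszulElt u k q c) =
      koszulElt (u + u p • z) k q c * koszulElt (u + u p • z) p q (-(z k * c)) := by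
  refine single_induction_of_eq_zero {p, q}
    (p := fun z => ∀ u : Fin n → B, conj (col p z) (koszulElt u k q c) =
      koszulElt (u + u p • z) k q c * koszulElt (u + u p • z) p q (-(z k * c))) z
    (by simp [hzp, hzq]) (by simp [col_zero, koszulElt_zero]) ?_ ?_ u
  · intro z w hz hw ihz ihw u
    rw [col_add, map_mul, mul_apply, ihw, map_mul, ihz,
      conj_col_koszulElt_same _ _ (hz p (by simp)) (hz q (by simp)), mul_assoc, ← koszulElt_add]
    simp [hw p, smul_add, add_assoc, add_comm (u p • z), add_comm (-(z k * c)), add_mul]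
  · intro r hr a u
    simp only [Set.mem_insert_iff, Set.mem_singleton_iff, not_or] at hr
    rw [col_single, ← Pi.single_smul, smul_eq_mul, mul_comm (u p)]
    rcases eq_or_ne r k with rfl | hrk
    · rw [conj_x_koszulElt u a c hkp hkq, Pi.single_eq_same]
    · rw [conj_x_koszulElt_of_ne u a c hr.1 hrk hr.2, Pi.single_eq_of_ne hrk.symm]
      simp [koszulElt_zero]

lemma koszulElt_mul_koszulElt (u : Fin n → B) (k l q : Fin n) (d : B) :
    koszulElt u k q (-(d * u l)) * koszulElt u l q (d * u k) = koszulElt u k l (-(d * u q)) := by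
  obtain ⟨i, hk, hl, hq⟩ := exists_ne_ne_ne k l q
  have hcyc := koszulElt_mul_koszulElt_mul_koszulElt u q k l d
  rw [koszulElt_swap u k q, (koszulElt_commute_of_ne u _ _ hk hq hk hl).eq, mul_assoc] at hcyc
  rw [koszulElt_neg u k l, eq_inv_of_mul_eq_one_right hcyc]

lemma conj_row_koszulVec_koszulElt {u w : Fin n → B} (c d : B) (hpk : p ≠ k) (hpl : p ≠ l)
    (hpq : p ≠ q) (h : koszulVec u k l c ⬝ᵥ w = 0) :
    conj (row p (koszulVec u k l c)) (koszulElt w p q d) =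
      koszulElt w p q d * koszulElt w k q (-(c * d * u l)) * koszulElt w l q (c * d * u k) := by
  rw [koszulVec_dotProduct] at h
  have hwk : (w + Pi.single p (-(c * u k) * w l) : Fin n → B) k = w k := by simp [hpk.symm]
  have hw : w + Pi.single p (-(c * u k) * w l) + Pi.single p (c * u l * w k) = w := by
    rw [add_assoc, ← Pi.single_add]
    convert add_zero w
    rw [Pi.single_eq_zero_iff]
    linear_combination h
  have conj_lq : conj (x p k (c * u l))
      (koszulElt (w + Pi.single p (-(c * u k) * w l)) l q (c * u k * d)) =
        koszulElt w l q (c * u k * d) := by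
    rw [conj_x_koszulElt_of_ne _ _ _ hpk hpl hpq, hwk, hw]
  rw [koszulVec, row_add, row_single, row_single, map_mul, mul_apply,
    conj_x_koszulElt w _ d hpl hpq, map_mul, conj_x_koszulElt _ _ d hpk hpq, hwk, hw,
    neg_mul (c * u k) d, neg_neg, conj_lq, mul_right_comm c d, mul_right_comm c d]

lemma conj_row_koszulVec_koszulElt_left (u : Fin n → B) (c d : B) (hpk : p ≠ k) (hpl : p ≠ l)
    (hpq : p ≠ q) : conj (row p (koszulVec u k l c)) (koszulElt u p q d) =
      koszulElt u p q d * koszulElt u k l (-(c * d * u q)) := by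
  rw [conj_row_koszulVec_koszulElt c d hpk hpl hpq (koszulVec_dotProduct_self _ _ _ _), mul_assoc,
    koszulElt_mul_koszulElt]

lemma conj_row_koszulVec_koszulElt_right (u : Fin n → B) (c d : B) (hqk : q ≠ k) (hql : q ≠ l)
    (hpq : p ≠ q) : conj (row q (koszulVec u k l c)) (koszulElt u p q d) =
      koszulElt u p q d * koszulElt u k l (c * d * u p) := by
  rw [koszulElt_swap u q p d, conj_row_koszulVec_koszulElt_left u c _ hqk hql hpq.symm]
  ring_nf

lemma row_koszulVec_commute_koszulElt (u : Fin n → B) (c d : B) (hpk : p ≠ k) (hpl : p ≠ l) :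
    Commute (row p (koszulVec u k l c)) (koszulElt u k l d) := by
  have huk : (u + Pi.single p (-(c * u k) * u l) : Fin n → B) k = u k := by simp [hpk.symm]
  rw [← conj_eq_self_iff, koszulVec, row_add, row_single, row_single, map_mul, mul_apply,
    conj_x_koszulElt_of_ne _ _ _ hpl hpk hpl, conj_x_koszulElt_of_ne _ _ _ hpk hpk hpl, huk,
    add_assoc, ← Pi.single_add, neg_mul, mul_right_comm, neg_add_cancel, Pi.single_zero, add_zero]

lemma koszulElt_eq_row_mul_colRow_mul_row (u : Fin n → B) (c : B) (hpk : p ≠ k) (hpl : p ≠ l)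
    (hqk : q ≠ k) (hql : q ≠ l) (hpq : p ≠ q) :
    koszulElt u k l c = row q (koszulVec u k l (u q * c)) *
      colRow p (eraseTwo p q u) (koszulVec u k l c) * row p (koszulVec u k l (u p * c)) := by
  rw [koszulElt_eq_transvec u c hpk hpl, transvec_eq_mul_mul hpq (koszulVec_of_ne _ _ hpk hpl)
    (koszulVec_of_ne _ _ hqk hql) (koszulVec_dotProduct_self _ _ _ _), koszulVec_mul, koszulVec_mul]

lemma colRow_eraseTwo_commute_koszulElt_same (u : Fin n → B) (c d : B) (hpk : p ≠ k) (hpl : p ≠ l)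
    (hqk : q ≠ k) (hql : q ≠ l) (hpq : p ≠ q) :
    Commute (colRow p (eraseTwo p q u) (koszulVec u k l c)) (koszulElt u k l d) := by
  have hsplit := koszulElt_eq_row_mul_colRow_mul_row u c hpk hpl hqk hql hpq
  rw [← mul_inv_eq_iff_eq_mul, ← inv_mul_eq_iff_eq_mul] at hsplit
  rw [← hsplit]
  exact (row_koszulVec_commute_koszulElt u _ d hqk hql).inv_left.mul_left
    ((koszulElt_commute_of_ne u c d hpk hpl hpk hpl).mul_left
      (row_koszulVec_commute_koszulElt u _ d hpk hpl).inv_left)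

lemma conj_col_mul_row_koszulElt {u w z : Fin n → B} (c d : B) (hkl : k ≠ l) (hpk : p ≠ k)
    (hpl : p ≠ l) (hqk : q ≠ k) (hql : q ≠ l) (hpq : p ≠ q) (hzp : z p = 0) (hzq : z q = 0)
    (hzk : z k = u k) (hzl : z l = u l) (hwu : w + w p • z = u)
    (hvw : koszulVec u k l c ⬝ᵥ w = 0) :
    conj (col p z * row p (koszulVec u k l c)) (koszulElt w p q d) =
      koszulElt u p q d * koszulElt u k l (-(c * d * u q)) := by
  have hcomm : Commute (koszulElt u p q (u k * (c * d * u l))) (koszulElt u l q (c * d * u k)) :=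
    koszulElt_commute_of_ne u _ _ hpk.symm hqk.symm hkl hqk.symm
  have hcancel : u l * (c * d * u k) = u k * (c * d * u l) := by ring
  rw [map_mul, mul_apply, conj_row_koszulVec_koszulElt c d hpk hpl hpq hvw, map_mul, map_mul,
    conj_col_koszulElt_same w d hzp hzq, conj_col_koszulElt w _ hpk.symm hqk.symm hzp hzq,
    conj_col_koszulElt w _ hpl.symm hql.symm hzp hzq, hwu, hzk, hzl, mul_neg, neg_neg, hcancel,
    koszulElt_neg u p q, ← koszulElt_mul_koszulElt u k l q, mul_assoc, mul_assoc,
    ← hcomm.inv_left.eq, mul_inv_cancel_left, mul_assoc]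

-- Conjugating `koszulElt w p q d`, where `w = u - uₚ z`, by the column and the row of the
-- commutator in either order gives the same result.
lemma colRow_eraseTwo_commute_koszulElt (u : Fin n → B) (c d : B) (hkl : k ≠ l) (hpk : p ≠ k)
    (hpl : p ≠ l) (hqk : q ≠ k) (hql : q ≠ l) (hpq : p ≠ q) :
    Commute (colRow p (eraseTwo p q u) (koszulVec u k l c)) (koszulElt u p q d) := by
  set z := eraseTwo p q u with hz
  set v := koszulVec u k l c with hv
  have hzp : z p = 0 := eraseTwo_left _ _ _
  have hzq : z q = 0 := eraseTwo_right _ _ _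
  have hzk : z k = u k := by simp [hz, eraseTwo, hpk.symm, hqk.symm]
  have hzl : z l = u l := by simp [hz, eraseTwo, hpl.symm, hql.symm]
  set w := u - u p • z with hw
  have hwu : w + w p • z = u := by simp [hw, hzp]
  have hvw : v ⬝ᵥ w = 0 := by
    rw [hv, koszulVec_dotProduct]
    simp only [hw, Pi.sub_apply, Pi.smul_apply, smul_eq_mul, hzk, hzl]
    ring
  have conj_col : conj (col p z) (koszulElt w p q d) = koszulElt u p q d := by
    rw [conj_col_koszulElt_same w d hzp hzq, hwu]
  have conj_row_col : conj (row p v * col p z) (koszulElt w p q d) =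
      koszulElt u p q d * koszulElt u k l (-(c * d * u q)) := by
    rw [map_mul, mul_apply, conj_col, conj_row_koszulVec_koszulElt_left u c d hpk hpl hpq]
  have conj_col_row : conj (col p z * row p v) (koszulElt w p q d) =
      koszulElt u p q d * koszulElt u k l (-(c * d * u q)) :=
    conj_col_mul_row_koszulElt c d hkl hpk hpl hqk hql hpq hzp hzq hzk hzl hwu hvw
  have colRow_mul : colRow p z v * (row p v * col p z) = col p z * row p v := by
    simp [colRow, commutatorElement_def, mul_assoc]
  have fixed : conj (colRow p z v) (koszulElt u p q d * koszulElt u k l (-(c * d * u q))) =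
      koszulElt u p q d * koszulElt u k l (-(c * d * u q)) := by
    conv_lhs => rw [← conj_row_col]
    rw [← mul_apply, ← map_mul, colRow_mul, conj_col_row]
  rwa [map_mul, conj_eq_self_iff.2 (colRow_eraseTwo_commute_koszulElt_same u c _ hpk hpl hqk hql
    hpq), mul_left_inj, conj_eq_self_iff] at fixed

lemma koszulElt_commute_of_disjoint (u : Fin n → B) (c d : B) (hkl : k ≠ l) (hpk : p ≠ k)
    (hpl : p ≠ l) (hqk : q ≠ k) (hql : q ≠ l) (hpq : p ≠ q) :
    Commute (koszulElt u k l c) (koszulElt u p q d) := by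
  have row_q := row_koszulVec_commute_koszulElt u (u q * c) (-(u p * c * d * u q)) hqk hql
  have colRow_kl := colRow_eraseTwo_commute_koszulElt_same u c (-(u p * c * d * u q)) hpk hpl hqk
    hql hpq
  have hcancel : u q * c * d * u p + -(u p * c * d * u q) = 0 := by ring
  rw [← conj_eq_self_iff, koszulElt_eq_row_mul_colRow_mul_row u c hpk hpl hqk hql hpq, map_mul,
    map_mul, mul_apply, mul_apply, conj_row_koszulVec_koszulElt_left u _ d hpk hpl hpq, map_mul,
    conj_eq_self_iff.2 (colRow_eraseTwo_commute_koszulElt u c d hkl hpk hpl hqk hql hpq),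
    conj_eq_self_iff.2 colRow_kl, map_mul, conj_row_koszulVec_koszulElt_right u _ d hqk hql hpq,
    conj_eq_self_iff.2 row_q, mul_assoc, ← koszulElt_add, hcancel, koszulElt_zero, mul_one]

lemma koszulElt_commute (u : Fin n → B) (k l p q : Fin n) (c d : B) :
    Commute (koszulElt u k l c) (koszulElt u p q d) := by
  by_cases hdisj : p ≠ k ∧ p ≠ l ∧ q ≠ k ∧ q ≠ l
  · rcases eq_or_ne k l with rfl | hkl
    · simp [koszulElt_self]
    rcases eq_or_ne p q with rfl | hpq
    · simp [koszulElt_self]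
    obtain ⟨hpk, hpl, hqk, hql⟩ := hdisj
    exact koszulElt_commute_of_disjoint u c d hkl hpk hpl hqk hql hpq
  · have : ∃ i, i ≠ k ∧ i ≠ l ∧ i ≠ p ∧ i ≠ q := by
      obtain ⟨i, hik, hil, hip⟩ := exists_ne_ne_ne k l p
      obtain ⟨j, hjk, hjl, hjq⟩ := exists_ne_ne_ne k l q
      by_cases hp : p = k ∨ p = l
      · exact ⟨j, hjk, hjl, by rcases hp with rfl | rfl <;> assumption, hjq⟩
      · refine ⟨i, hik, hil, hip, ?_⟩
        obtain rfl | rfl : q = k ∨ q = l := by tauto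
        all_goals assumption
    obtain ⟨i, hk, hl, hp, hq⟩ := this
    exact koszulElt_commute_of_ne u c d hk hl hp hq

end Commute

open Matrix

section Rep

variable {n : ℕ} {B : Type} [CommRing B] {i : Fin n}

lemma vecMulVec_single_single (i j : Fin n) (a b : B) :
    vecMulVec (Pi.single i a) (Pi.single j b) = single i j (a * b) := by
  ext k l
  simp only [vecMulVec_apply, single_apply, Pi.single_apply, ite_and, eq_comm]
  split_ifs <;> simp

lemma isSteinbergFamily_transvection :
    IsSteinbergFamily fun (i j : Fin n) h (r : B) =>
      Matrix.SpecialLinearGroup.transvection h r where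
  add _ _ h := Matrix.SpecialLinearGroup.transvection_add h
  commute i j h k hij hhk hjh hik r s := by
    apply Subtype.ext
    simp only [Matrix.SpecialLinearGroup.coe_mul, Matrix.SpecialLinearGroup.transvection_coe,
      add_mul, mul_add, one_mul, mul_one, single_mul_single_of_ne _ _ _ _ hjh,
      single_mul_single_of_ne _ _ _ _ hik.symm]
    abel
  commutatorElement i j k hij hjk hik r s := by
    rw [commutatorElement_def, mul_inv_eq_iff_eq_mul, mul_inv_eq_iff_eq_mul]
    apply Subtype.ext
    simp only [Matrix.SpecialLinearGroup.coe_mul, Matrix.SpecialLinearGroup.transvection_coe,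
      add_mul, mul_add, one_mul, mul_one, single_mul_single_same, add_zero,
      single_mul_single_of_ne _ _ _ _ hjk.symm, single_mul_single_of_ne _ _ _ _ hik.symm]
    abel

/-- The natural homomorphism `St(n, B) → SL(n, B)`. -/
def rep : SteinbergGroup n B →* SL(n, B) := lift _ isSteinbergFamily_transvection

lemma rep_x {i j : Fin n} (h : i ≠ j) (r : B) :
    rep (x i j r) = Matrix.SpecialLinearGroup.transvection h r := lift_x _ _ h r

lemma coe_rep_x {i j : Fin n} (h : i ≠ j) (r : B) :
    (rep (x i j r) : Matrix (Fin n) (Fin n) B) = 1 + single i j r := by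
  rw [rep_x h, Matrix.SpecialLinearGroup.transvection_coe]

lemma coe_rep_row {v : Fin n → B} (hv : v i = 0) :
    (rep (row i v) : Matrix (Fin n) (Fin n) B) = 1 + vecMulVec (Pi.single i 1) v := by
  refine single_induction_of_eq_zero {i} (p := fun v =>
    (rep (row i v) : Matrix (Fin n) (Fin n) B) = 1 + vecMulVec (Pi.single i 1) v)
    v (by simpa using hv) ?_ ?_ ?_
  · simp [row_zero]
  · intro v w hv _ ihv ihw
    rw [row_add, map_mul, Matrix.SpecialLinearGroup.coe_mul, ihv, ihw, mul_add, add_mul, add_mul,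
      vecMulVec_mul_vecMulVec, dotProduct_single_one, hv i rfl, vecMulVec_add]
    simp [add_assoc]
  · intro k hk a
    rw [row_single, coe_rep_x (Ne.symm hk), vecMulVec_single_single, one_mul]

lemma coe_rep_col {v : Fin n → B} (hv : v i = 0) :
    (rep (col i v) : Matrix (Fin n) (Fin n) B) = 1 + vecMulVec v (Pi.single i 1) := by
  refine single_induction_of_eq_zero {i} (p := fun v =>
    (rep (col i v) : Matrix (Fin n) (Fin n) B) = 1 + vecMulVec v (Pi.single i 1))
    v (by simpa using hv) ?_ ?_ ?_
  · simp [col_zero]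
  · intro v w _ hw ihv ihw
    rw [col_add, map_mul, Matrix.SpecialLinearGroup.coe_mul, ihv, ihw, mul_add, add_mul, add_mul,
      vecMulVec_mul_vecMulVec, single_one_dotProduct, hw i rfl, add_vecMulVec]
    simp [add_assoc]
  · intro k hk a
    rw [col_single, coe_rep_x hk, vecMulVec_single_single, mul_one]

lemma one_add_mul_one_add_mul_one_sub_mul_one_sub {S : Type*} [Ring S] {N L : S} (hN : N * N = 0)
    (hL : L * L = 0) (hLN : L * N = 0) : (1 + N) * (1 + L) * (1 - N) * (1 - L) = 1 + N * L := by
  have : (1 + N) * (1 + L) * (1 - N) * (1 - L) = 1 + N * L - N * N + N * N * L - L * N + L * N * L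
    - L * L - N * (L * N) + N * (L * N) * L - N * (L * L) := by noncomm_ring
  rw [this, hN, hL, hLN]
  simp

lemma coe_rep_colRow {z v : Fin n → B} (hz : z i = 0) (hv : v i = 0) (hvz : v ⬝ᵥ z = 0) :
    (rep (colRow i z v) : Matrix (Fin n) (Fin n) B) = 1 + vecMulVec z v := by
  rw [colRow, commutatorElement_def, ← col_neg, ← row_neg]
  simp only [map_mul, Matrix.SpecialLinearGroup.coe_mul]
  rw [coe_rep_col hz, coe_rep_row hv, coe_rep_col (by simp [hz]), coe_rep_row (by simp [hv]),
    neg_vecMulVec, vecMulVec_neg, ← sub_eq_add_neg, ← sub_eq_add_neg,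
    one_add_mul_one_add_mul_one_sub_mul_one_sub] <;>
  simp [vecMulVec_mul_vecMulVec, hz, hv, hvz]

lemma coe_rep_transvec {u v : Fin n → B} (hv : v i = 0) (hvu : v ⬝ᵥ u = 0) :
    (rep (transvec i u v) : Matrix (Fin n) (Fin n) B) = 1 + vecMulVec u v := by
  obtain ⟨z, a, hz, rfl⟩ : ∃ z a, z i = 0 ∧ u = z + Pi.single i a :=
    ⟨u - Pi.single i (u i), u i, by simp, by simp⟩
  have hvz : v ⬝ᵥ z = 0 := by simpa [hv] using hvu
  have hcol : col i (z + Pi.single i a) = col i z := by rw [col_add, col_single, x_self, mul_one]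
  have hsmul : vecMulVec (Pi.single i 1) (a • v) = vecMulVec (Pi.single i a) v := by
    rw [vecMulVec_smul, ← smul_vecMulVec, ← Pi.single_smul, smul_eq_mul, mul_one]
  rw [transvec, colRow, hcol, map_mul, Matrix.SpecialLinearGroup.coe_mul]
  simp only [Pi.add_apply, hz, Pi.single_eq_same, zero_add]
  rw [← colRow, coe_rep_colRow hz hv hvz, coe_rep_row (by simp [hv]), mul_add, add_mul, add_mul,
    vecMulVec_mul_vecMulVec, dotProduct_single_one, hv, hsmul, add_vecMulVec]
  simp [add_assoc]

end Rep

section KoszulProd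

variable {n : ℕ} [Fact (4 ≤ n)] {B : Type} [CommRing B]

lemma koszulElt_single_one {i j : Fin n} (h : i ≠ j) (c : B) :
    koszulElt (Pi.single i 1) j i c = x i j c := by
  obtain ⟨m, hmj, hmi, -⟩ := exists_ne_ne_ne j i i
  have hvec : koszulVec (Pi.single i 1) j i c = Pi.single j c := by simp [koszulVec, h.symm]
  rw [koszulElt_eq_transvec _ c hmj hmi, hvec, transvec, colRow, col_single, row_single,
    commutatorElement_x_x hmi.symm hmj h, one_mul, Pi.single_eq_of_ne hmi, zero_smul, row_zero,
    mul_one]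

/-- The product of the elements `koszulElt u k l (C k l)`, a lift of `1 + u ((C - Cᵀ) u)ᵀ`. -/
noncomputable def koszulProd (u : Fin n → B) (C : Matrix (Fin n) (Fin n) B) :
    SteinbergGroup n B :=
  additiveProd (fun kl : Fin n × Fin n => koszulElt u kl.1 kl.2) (fun _ => koszulElt_add u _ _)
    (fun _ _ => koszulElt_commute u _ _ _ _) (ofAdd fun kl => C kl.1 kl.2)

lemma koszulProd_add (u : Fin n → B) (C D : Matrix (Fin n) (Fin n) B) :
    koszulProd u (C + D) = koszulProd u C * koszulProd u D := map_mul _ _ _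

lemma koszulProd_zero (u : Fin n → B) : koszulProd u 0 = 1 := map_one _

lemma koszulProd_neg (u : Fin n → B) (C : Matrix (Fin n) (Fin n) B) :
    koszulProd u (-C) = (koszulProd u C)⁻¹ := map_inv _ _

lemma koszulProd_single (u : Fin n → B) (k l : Fin n) (c : B) :
    koszulProd u (single k l c) = koszulElt u k l c := by
  have : (fun pq : Fin n × Fin n => single k l c pq.1 pq.2) = Pi.single (k, l) c := by
    funext ⟨p, q⟩
    rw [single_apply, Pi.single_apply]
    simp only [Prod.mk.injEq, eq_comm]
  rw [koszulProd, this, additiveProd_single]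

lemma koszulProd_smul (s : B) (u : Fin n → B) (C : Matrix (Fin n) (Fin n) B) :
    koszulProd (s • u) C = koszulProd u ((s * s) • C) := by
  induction C using Matrix.induction_on' with
  | h_zero => simp [koszulProd_zero]
  | h_add C D hC hD => rw [koszulProd_add, hC, hD, ← koszulProd_add, smul_add]
  | h_std_basis k l c =>
    rw [smul_single, koszulProd_single, koszulProd_single, koszulElt_smul, smul_eq_mul]

lemma koszulProd_transpose (u : Fin n → B) (C : Matrix (Fin n) (Fin n) B) :
    koszulProd u Cᵀ = koszulProd u (-C) := by
  induction C using Matrix.induction_on' with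
  | h_zero => simp
  | h_add C D hC hD => rw [transpose_add, koszulProd_add, hC, hD, ← koszulProd_add, neg_add]
  | h_std_basis k l c =>
    rw [transpose_single, koszulProd_neg, koszulProd_single, koszulProd_single, koszulElt_swap,
      koszulElt_neg]

lemma coe_rep_koszulProd (u : Fin n → B) (C : Matrix (Fin n) (Fin n) B) :
    (rep (koszulProd u C) : Matrix (Fin n) (Fin n) B) = 1 + vecMulVec u ((C - Cᵀ) *ᵥ u) := by
  have dot_self (C : Matrix (Fin n) (Fin n) B) : ((C - Cᵀ) *ᵥ u) ⬝ᵥ u = 0 := by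
    rw [sub_mulVec, sub_dotProduct, mulVec_transpose, ← dotProduct_mulVec,
      dotProduct_comm, sub_self]
  induction C using Matrix.induction_on' with
  | h_zero => simp [koszulProd_zero]
  | h_add C D hC hD =>
    rw [koszulProd_add, map_mul, Matrix.SpecialLinearGroup.coe_mul, hC, hD, mul_add, add_mul,
      add_mul, vecMulVec_mul_vecMulVec, dot_self, transpose_add, add_sub_add_comm, add_mulVec,
      vecMulVec_add]
    simp [add_assoc]
  | h_std_basis k l c =>
    obtain ⟨i, hk, hl, -⟩ := exists_ne_ne_ne k l l
    rw [koszulProd_single, koszulElt_eq_transvec _ _ hk hl, coe_rep_transvec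
      (koszulVec_of_ne _ _ hk hl) (koszulVec_dotProduct_self _ _ _ _), transpose_single, sub_mulVec,
      single_mulVec, single_mulVec, koszulVec, Pi.single_neg, ← sub_eq_add_neg]
    rfl

end KoszulProd

section FormAct

variable {n : ℕ} {B : Type} [CommRing B]

/-- The action `C ↦ g⁻ᵀ C g⁻¹` of `SL(n, B)` on bilinear forms. -/
def formAct (g : SL(n, B)) (C : Matrix (Fin n) (Fin n) B) : Matrix (Fin n) (Fin n) B :=
  (↑g⁻¹ : Matrix (Fin n) (Fin n) B)ᵀ * C * (↑g⁻¹ : Matrix (Fin n) (Fin n) B)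

lemma formAct_one (C : Matrix (Fin n) (Fin n) B) : formAct 1 C = C := by simp [formAct]

lemma formAct_mul (g h : SL(n, B)) (C : Matrix (Fin n) (Fin n) B) :
    formAct (g * h) C = formAct g (formAct h C) := by
  simp only [formAct, _root_.mul_inv_rev, Matrix.SpecialLinearGroup.coe_mul, transpose_mul,
    mul_assoc]

lemma formAct_add (g : SL(n, B)) (C D : Matrix (Fin n) (Fin n) B) :
    formAct g (C + D) = formAct g C + formAct g D := by
  simp only [formAct, mul_add, add_mul]

lemma formAct_transpose (g : SL(n, B)) (C : Matrix (Fin n) (Fin n) B) :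
    formAct g Cᵀ = (formAct g C)ᵀ := by
  simp only [formAct, transpose_mul, transpose_transpose, mul_assoc]

lemma isSymm_formAct_sub {g : SL(n, B)} {C : Matrix (Fin n) (Fin n) B} {a b : Fin n → B}
    (hg : (↑g⁻¹ : Matrix (Fin n) (Fin n) B) = 1 + vecMulVec a b) (hC : C *ᵥ a = Cᵀ *ᵥ a) :
    (formAct g C - C).IsSymm := by
  have : formAct g C - C =
      vecMulVec (C *ᵥ a) b + vecMulVec b (C *ᵥ a) + ((C *ᵥ a) ⬝ᵥ a) • vecMulVec b b := by
    rw [formAct, hg, transpose_add, transpose_one, transpose_vecMulVec, add_mul, one_mul, mul_add,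
      mul_one, vecMulVec_mul, ← mulVec_transpose, ← hC, mul_vecMulVec, add_mulVec, add_vecMulVec,
      vecMulVec_mulVec, op_smul_eq_smul, smul_vecMulVec]
    abel
  rw [this, IsSymm, transpose_add, transpose_add, transpose_smul, transpose_vecMulVec,
    transpose_vecMulVec, transpose_vecMulVec, add_comm (vecMulVec b _)]

lemma formAct_transvection_single {r s l : Fin n} (hrs : r ≠ s) (t : B) (k : Fin n) (c : B)
    (hrl : r ≠ l) : formAct (Matrix.SpecialLinearGroup.transvection hrs t) (single k l c) =
      single k l c + if r = k then single s l (-(t * c)) else 0 := by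
  rw [formAct, Matrix.SpecialLinearGroup.transvection_inv,
    Matrix.SpecialLinearGroup.transvection_coe, transpose_add, transpose_one, transpose_single,
    add_mul, one_mul]
  split_ifs with hrk
  · subst hrk
    simp [mul_add, add_mul, hrl.symm]
  · simp [mul_add, hrk, hrl.symm]

end FormAct

section Equivariance

variable {n : ℕ} [Fact (4 ≤ n)] {B : Type} [CommRing B]

lemma koszulProd_of_isSymm (u : Fin n → B) {C : Matrix (Fin n) (Fin n) B} (hC : C.IsSymm) :
    koszulProd u C = 1 := by
  have koszulProd_diagonal (d : Fin n → B) : koszulProd u (diagonal d) = 1 := by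
    refine single_induction_of_eq_zero ∅ (p := fun d => koszulProd u (diagonal d) = 1) d (by simp)
      ?_ ?_ ?_
    · simp [koszulProd_zero]
    · intro v w _ _ hv hw
      have hadd : diagonal (v + w) = diagonal v + diagonal w := (diagonal_add v w).symm
      rw [hadd, koszulProd_add, hv, hw, one_mul]
    · intro k _ a
      rw [diagonal_single, koszulProd_single, koszulElt_self]
  let U : Matrix (Fin n) (Fin n) B := of fun k l => if k < l then C k l else 0
  have hU : C = U + Uᵀ + diagonal C.diag := by
    ext k l
    rcases lt_trichotomy k l with h | rfl | h
    · simp [U, h, h.ne, h.not_gt]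
    · simp [U]
    · simp [U, h, h.ne', h.not_gt, hC.apply]
  rw [hU, koszulProd_add, koszulProd_add, koszulProd_transpose, koszulProd_diagonal,
    koszulProd_neg, mul_inv_cancel, one_mul]

lemma koszulProd_eq_of_isSymm_sub (u : Fin n → B) {C D : Matrix (Fin n) (Fin n) B}
    (h : (C - D).IsSymm) : koszulProd u C = koszulProd u D := by
  rw [← sub_add_cancel C D, koszulProd_add, koszulProd_of_isSymm u h, one_mul]

lemma conj_x_koszulElt_eq_koszulProd (u : Fin n → B) {r s : Fin n} (hrs : r ≠ s) (t : B)
    (k l : Fin n) (c : B) :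
    conj (x r s t) (koszulElt u k l c) = koszulProd (u + Pi.single r (t * u s))
      (formAct (Matrix.SpecialLinearGroup.transvection hrs t) (single k l c)) := by
  have right_ne {k l : Fin n} (c : B) (hkl : k ≠ l) (hrl : r ≠ l) :
      conj (x r s t) (koszulElt u k l c) = koszulProd (u + Pi.single r (t * u s))
        (formAct (Matrix.SpecialLinearGroup.transvection hrs t) (single k l c)) := by
    rw [formAct_transvection_single hrs t k c hrl, koszulProd_add, koszulProd_single]
    split_ifs with hrk
    · subst hrk
      rw [koszulProd_single, conj_x_koszulElt u t c hrs hkl]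
    · rw [koszulProd_zero, mul_one, conj_x_koszulElt_of_ne u t c hrs hrk hrl]
  rcases eq_or_ne k l with rfl | hkl
  · rw [koszulElt_self, map_one, koszulProd_of_isSymm]
    rw [IsSymm, ← formAct_transpose, transpose_single]
  rcases eq_or_ne r l with rfl | hrl
  · rw [koszulElt_swap, koszulElt_neg, map_inv, right_ne c hkl.symm hkl.symm, ← koszulProd_neg,
      ← koszulProd_transpose, ← formAct_transpose, transpose_single]
  · exact right_ne c hkl hrl

lemma conj_koszulProd (b : SteinbergGroup n B) (u : Fin n → B) (C : Matrix (Fin n) (Fin n) B) :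
    conj b (koszulProd u C) = koszulProd (↑(rep b) *ᵥ u) (formAct (rep b) C) := by
  induction b using x_induction generalizing u C with
  | one => simp [formAct_one]
  | mul a b iha ihb =>
    rw [map_mul, MulAut.mul_apply, ihb, iha, map_mul, Matrix.SpecialLinearGroup.coe_mul,
      mulVec_mulVec, formAct_mul]
  | x r s hrs t =>
    have rep_x_mulVec : ↑(rep (x r s t)) *ᵥ u = u + Pi.single r (t * u s) := by
      rw [coe_rep_x hrs, add_mulVec, one_mulVec, single_mulVec]
      rfl
    rw [rep_x_mulVec, rep_x hrs]
    induction C using Matrix.induction_on' with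
    | h_zero => simp [koszulProd_zero, formAct]
    | h_add C D hC hD => rw [koszulProd_add, map_mul, hC, hD, formAct_add, koszulProd_add]
    | h_std_basis k l c => rw [koszulProd_single, conj_x_koszulElt_eq_koszulProd u hrs]

lemma col_commute_koszulProd {i : Fin n} {u z : Fin n → B} {C : Matrix (Fin n) (Fin n) B}
    (hu : u i = 0) (hz : z i = 0) (hC : C *ᵥ z = Cᵀ *ᵥ z) :
    Commute (col i z) (koszulProd u C) := by
  have hrep : ↑(rep (col i z)) *ᵥ u = u := by
    rw [coe_rep_col hz, add_mulVec, one_mulVec, vecMulVec_mulVec, single_one_dotProduct, hu]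
    simp
  rw [← conj_eq_self_iff, conj_koszulProd, hrep]
  refine koszulProd_eq_of_isSymm_sub u (isSymm_formAct_sub (a := -z) (b := Pi.single i 1) ?_ ?_)
  · rw [← map_inv, ← col_neg, coe_rep_col (by simp [hz])]
  · rw [mulVec_neg, mulVec_neg, hC]

end Equivariance

section CyclicForm

variable {n : ℕ} {B : Type} [CommRing B]

/-- The cyclic trilinear expression `(c·u) a bᵀ + (a·u) b cᵀ + (b·u) c aᵀ`. -/
def cyclicForm (u a b c : Fin n → B) : Matrix (Fin n) (Fin n) B :=
  (c ⬝ᵥ u) • vecMulVec a b + (a ⬝ᵥ u) • vecMulVec b c + (b ⬝ᵥ u) • vecMulVec c a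

lemma cyclicForm_rotate (u a b c : Fin n → B) : cyclicForm u a b c = cyclicForm u b c a := by
  rw [cyclicForm, cyclicForm, add_rotate]

lemma cyclicForm_mulVec (u a b c : Fin n → B) :
    cyclicForm u a b c *ᵥ u = (cyclicForm u a b c)ᵀ *ᵥ u := by
  simp only [cyclicForm, transpose_add, transpose_smul, transpose_vecMulVec, add_mulVec,
    smul_mulVec, vecMulVec_mulVec, op_smul_eq_smul, smul_smul]
  rw [mul_comm (c ⬝ᵥ u), mul_comm (a ⬝ᵥ u), mul_comm (b ⬝ᵥ u) (a ⬝ᵥ u)]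
  abel

/-- The value of `cyclicForm` at the basis vectors `e_k`, `e_l`, `e_m`, scaled by `d`. -/
def cyclicSingle (u : Fin n → B) (k l m : Fin n) (d : B) : Matrix (Fin n) (Fin n) B :=
  single k l (d * u m) + single l m (d * u k) + single m k (d * u l)

lemma cyclicForm_single (u : Fin n → B) (k l m : Fin n) (a b c : B) :
    cyclicForm u (Pi.single k a) (Pi.single l b) (Pi.single m c) =
      cyclicSingle u k l m (a * b * c) := by
  simp only [cyclicForm, cyclicSingle, vecMulVec_single_single, single_dotProduct, smul_single,
    smul_eq_mul]
  ring_nf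

lemma cyclicSingle_mulVec (u : Fin n → B) (k l m : Fin n) (d : B) :
    cyclicSingle u k l m d *ᵥ u = (cyclicSingle u k l m d)ᵀ *ᵥ u := by
  simpa [cyclicForm_single] using
    cyclicForm_mulVec u (Pi.single k d) (Pi.single l 1) (Pi.single m 1)

/-- The cross product `d (u × w)` with respect to the coordinates `k`, `l`, `m`. -/
def crossVec (u w : Fin n → B) (k l m : Fin n) (d : B) : Fin n → B :=
  koszulVec u k l (d * w m) + koszulVec u l m (d * w k) + koszulVec u m k (d * w l)

lemma crossVec_of_ne (u w : Fin n → B) {i k l m : Fin n} (d : B) (hk : i ≠ k) (hl : i ≠ l)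
    (hm : i ≠ m) : crossVec u w k l m d i = 0 := by
  simp [crossVec, koszulVec_of_ne, hk, hl, hm]

lemma crossVec_dotProduct_left (u w : Fin n → B) (k l m : Fin n) (d : B) :
    crossVec u w k l m d ⬝ᵥ u = 0 := by
  simp [crossVec, add_dotProduct, koszulVec_dotProduct_self]

lemma crossVec_eq (u w : Fin n → B) (k l m : Fin n) (d : B) :
    crossVec u w k l m d = Pi.single k (d * (u l * w m - u m * w l)) +
      Pi.single l (d * (u m * w k - u k * w m)) + Pi.single m (d * (u k * w l - u l * w k)) := by
  simp only [crossVec, koszulVec, mul_sub, Pi.single_sub, Pi.single_neg]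
  ring_nf

lemma crossVec_swap (u w : Fin n → B) (k l m : Fin n) (d : B) :
    crossVec w u k l m (-d) = crossVec u w k l m d := by
  rw [crossVec_eq, crossVec_eq]
  ring_nf

lemma crossVec_add_smul_left (u w : Fin n → B) (s : B) (k l m : Fin n) (d : B) :
    crossVec (u + s • w) w k l m d = crossVec u w k l m d := by
  simp only [crossVec_eq, Pi.add_apply, Pi.smul_apply, smul_eq_mul]
  ring_nf

end CyclicForm

section Biadditivity

variable {n : ℕ} {B : Type} [CommRing B] {i : Fin n}

lemma col_update (i : Fin n) (u : Fin n → B) (a : B) : col i (Function.update u i a) = col i u := by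
  have hupdate : Function.update u i a = u + Pi.single i (a - u i) := by
    funext k
    rcases eq_or_ne k i with rfl | hk <;> simp [*]
  rw [hupdate, col_add, col_single, x_self, mul_one]

lemma transvec_update_zero (i : Fin n) (u v : Fin n → B) :
    transvec i (Function.update u i 0) v = colRow i u v := by
  rw [transvec, colRow, col_update, Function.update_self, zero_smul, row_zero, mul_one, colRow]

lemma transvec_add_left {u w v : Fin n → B} (hcol : Commute (col i w) (colRow i u v))
    (hrow : Commute (row i (u i • v)) (transvec i w v)) :
    transvec i (u + w) v = transvec i u v * transvec i w v := by
  have hcolRow : colRow i (u + w) v = colRow i u v * colRow i w v := by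
    rw [add_comm, colRow, col_add, commutatorElement_mul_left_eq_conj_mul]
    exact congrArg (· * colRow i w v) (conj_eq_self_iff.2 hcol)
  calc transvec i (u + w) v
      = colRow i u v * (colRow i w v * row i (w i • v) * row i (u i • v)) := by
        rw [transvec, hcolRow, Pi.add_apply, add_comm, add_smul, row_add]
        group
    _ = colRow i u v * (row i (u i • v) * transvec i w v) := by rw [hrow.eq, transvec]
    _ = transvec i u v * transvec i w v := by
        rw [← mul_assoc, ← transvec]

variable [Fact (4 ≤ n)] {k l m : Fin n}

lemma transvec_smul_add_koszulVec (s : B) {w y : Fin n → B} (c : B) (hk : i ≠ k) (hl : i ≠ l)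
    (hy : y i = 0) (hyw : y ⬝ᵥ w = 0) : transvec i (s • w) (y + koszulVec w k l c) =
      transvec i (s • w) y * koszulElt w k l (s * c) := by
  obtain ⟨j, hjk, hjl, hji⟩ := exists_ne_ne_ne k l i
  have hi := koszulVec_of_ne w c hk hl
  have hj := koszulVec_of_ne w c hjk hjl
  have hdot := koszulVec_dotProduct_self w k l c
  rw [transvec_add hji.symm hy hi hj (by simp [hyw]) (by simp [hdot]),
    transvec_smul_left hji.symm s hi hj hdot, ← koszulVec_mul, koszulElt_eq_transvec w _ hk hl]

lemma koszulProd_cyclicSingle_mul (u w : Fin n → B) (s d : B) (hk : i ≠ k) (hl : i ≠ l)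
    (hm : i ≠ m) :
    koszulProd u (cyclicSingle w k l m (s * d)) = transvec i (s • u) (crossVec u w k l m d) := by
  rw [cyclicSingle, koszulProd_add, koszulProd_add, koszulProd_single, koszulProd_single,
    koszulProd_single, crossVec, transvec_smul_add_koszulVec s _ hm hk,
    transvec_smul_add_koszulVec s _ hl hm (koszulVec_of_ne _ _ hk hl)
      (koszulVec_dotProduct_self _ _ _ _), ← zero_add (koszulVec u k l _),
    transvec_smul_add_koszulVec s _ hk hl rfl (zero_dotProduct _), transvec_zero, one_mul,
    mul_assoc s, mul_assoc s, mul_assoc s]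
  · simp [koszulVec_of_ne, hk, hl, hm]
  · simp [add_dotProduct, koszulVec_dotProduct_self]

lemma koszulProd_cyclicSingle (u w : Fin n → B) (d : B) (hk : i ≠ k) (hl : i ≠ l) (hm : i ≠ m) :
    koszulProd u (cyclicSingle w k l m d) = transvec i u (crossVec u w k l m d) := by
  simpa using koszulProd_cyclicSingle_mul u w 1 d hk hl hm

lemma col_commute_colRow_crossVec (u w : Fin n → B) (s d : B) (hk : i ≠ k) (hl : i ≠ l)
    (hm : i ≠ m) : Commute (col i (s • w)) (colRow i u (crossVec u w k l m d)) := by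
  have hcross : crossVec u w k l m d =
      crossVec (Function.update u i 0) (Function.update w i 0) k l m d := by
    simp [crossVec_eq, hk.symm, hl.symm, hm.symm]
  have hform := cyclicSingle_mulVec (Function.update w i 0) k l m d
  rw [← col_update i _ 0, ← smul_zero s, Function.update_smul, ← transvec_update_zero, hcross,
    ← koszulProd_cyclicSingle _ _ d hk hl hm]
  exact col_commute_koszulProd (by simp) (by simp) (by rw [mulVec_smul, mulVec_smul, hform])

lemma row_commute_koszulElt {w y : Fin n → B} (c : B) (hk : i ≠ k) (hl : i ≠ l) (hy : y i = 0)
    (hyw : y ⬝ᵥ w = 0) : Commute (row i y) (koszulElt w k l c) := by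
  obtain ⟨j, hjk, hjl, hji⟩ := exists_ne_ne_ne k l i
  have hi := koszulVec_of_ne w c hk hl
  rw [koszulElt_eq_transvec w c hk hl, transvec]
  exact (row_commute_colRow hji.symm hi (koszulVec_of_ne w c hjk hjl) hy
    (koszulVec_dotProduct_self w k l c) hyw).mul_right (row_commute_row hy (by simp [hi]))

lemma koszulProd_add_smul_cyclicSingle (u w : Fin n → B) (s : B) (k l m : Fin n) (d : B) :
    koszulProd (u + s • w) (cyclicSingle w k l m d) =
      koszulProd u (cyclicSingle w k l m d) * koszulProd w (cyclicSingle u k l m (-(s * d))) := by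
  obtain ⟨i, hk, hl, hm⟩ := exists_ne_ne_ne k l m
  have hw : koszulProd w (cyclicSingle u k l m (-(s * d))) =
      transvec i (s • w) (crossVec u w k l m d) := by
    rw [← mul_neg, koszulProd_cyclicSingle_mul w u s (-d) hk hl hm, crossVec_swap]
  have hdot : crossVec u w k l m d ⬝ᵥ w = 0 := by
    rw [← crossVec_swap, crossVec_dotProduct_left]
  have hrow : Commute (row i (u i • crossVec u w k l m d))
      (koszulProd w (cyclicSingle u k l m (-(s * d)))) := by
    have row_commute {p q : Fin n} (c : B) (hp : i ≠ p) (hq : i ≠ q) :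
        Commute (row i (u i • crossVec u w k l m d)) (koszulElt w p q c) :=
      row_commute_koszulElt c hp hq (by simp [crossVec_of_ne u w d hk hl hm]) (by simp [hdot])
    rw [cyclicSingle, koszulProd_add, koszulProd_add, koszulProd_single, koszulProd_single,
      koszulProd_single]
    exact ((row_commute _ hk hl).mul_right (row_commute _ hl hm)).mul_right (row_commute _ hm hk)
  rw [koszulProd_cyclicSingle _ w d hk hl hm, koszulProd_cyclicSingle _ w d hk hl hm,
    crossVec_add_smul_left, hw]
  exact transvec_add_left (col_commute_colRow_crossVec u w s d hk hl hm) (hw ▸ hrow)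

end Biadditivity

section ClearsDenominators

variable {n : ℕ} {B A : Type} [CommRing B] [CommRing A] [Algebra B A]

variable (B A) in
/-- The elements of `B` that become invertible in `A`. That `A` is a localization of `B` is
expressed as localization at this largest possible submonoid, so that no submonoid has to be
carried along. -/
abbrev invertedElements : Submonoid B := (IsUnit.submonoid A).comap (algebraMap B A)

/-- The vector `u` over `B` is the multiple `σ U` of the vector `U` over `A`, where `σ` has inverse
`t` in `A`. -/
structure ClearsDenominators (U : Fin n → A) (σ : B) (t : A) (u : Fin n → B) : Prop where
  mul_eq_one : algebraMap B A σ * t = 1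
  map_eq : ∀ k, algebraMap B A (u k) = algebraMap B A σ * U k

lemma exists_common_denominator [IsLocalization (invertedElements B A) A] {ι : Type*} [Finite ι]
    (U : ι → A) : ∃ (σ : B) (t : A) (u : ι → B), algebraMap B A σ * t = 1 ∧
      ∀ k, algebraMap B A (u k) = algebraMap B A σ * U k := by
  obtain ⟨σ, hσ⟩ := IsLocalization.exist_integer_multiples_of_finite (invertedElements B A) U
  obtain ⟨t, ht⟩ := σ.2.exists_right_inv
  choose u hu using hσ
  exact ⟨σ, t, u, ht, fun k => by rw [hu, Algebra.smul_def]⟩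

variable (B) in
lemma exists_clearsDenominators [IsLocalization (invertedElements B A) A] (U : Fin n → A) :
    ∃ (σ : B) (t : A) (u : Fin n → B), ClearsDenominators U σ t u :=
  let ⟨σ, t, u, hσ, hu⟩ := exists_common_denominator U
  ⟨σ, t, u, hσ, hu⟩

lemma ClearsDenominators.exists_smul_eq_smul [IsLocalization (invertedElements B A) A]
    {U : Fin n → A} {σ σ' : B} {t t' : A} {u u' : Fin n → B} (h : ClearsDenominators U σ t u)
    (h' : ClearsDenominators U σ' t' u') :
    ∃ s : invertedElements B A, (s * σ' : B) • u = (s * σ : B) • u' := by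
  have heq (k : Fin n) : algebraMap B A (σ' * u k) = algebraMap B A (σ * u' k) := by
    rw [map_mul, map_mul, h.map_eq, h'.map_eq]
    ring
  choose s hs using fun k => IsLocalization.exists_of_eq (M := invertedElements B A) (heq k)
  refine ⟨∏ k, s k, funext fun k => ?_⟩
  rw [← Finset.prod_erase_mul _ _ (Finset.mem_univ k)]
  simp only [Submonoid.coe_mul, Pi.smul_apply, smul_eq_mul]
  linear_combination (↑(∏ l ∈ Finset.univ.erase k, s l) : B) * hs k

lemma linearMap_algebraMap_mul (j : A →ₗ[B] B) (b : B) (c : A) :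
    j (algebraMap B A b * c) = b * j c := by
  rw [← Algebra.smul_def, map_smul, smul_eq_mul]

lemma algebraMap_linearMap_apply [IsLocalization (invertedElements B A) A] (j : A →ₗ[B] B)
    (c : A) : algebraMap B A (j c) = c * algebraMap B A (j 1) := by
  simpa using ((Algebra.linearMap B A ∘ₗ j).extendScalarsOfIsLocalization
    (invertedElements B A) A).map_smul c 1

end ClearsDenominators

section ScaledMap

variable {n : ℕ} {B A : Type} [CommRing B] [CommRing A] [Algebra B A]

/-- The entrywise image of a matrix under `c ↦ j (t² c)`. -/
def scaledMap (j : A →ₗ[B] B) (t : A) (C : Matrix (Fin n) (Fin n) A) :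
    Matrix (Fin n) (Fin n) B :=
  C.map fun c => j (t * t * c)

lemma scaledMap_add (j : A →ₗ[B] B) (t : A) (C D : Matrix (Fin n) (Fin n) A) :
    scaledMap j t (C + D) = scaledMap j t C + scaledMap j t D := by
  ext
  simp [scaledMap, mul_add]

lemma scaledMap_single (j : A →ₗ[B] B) (t c : A) (k l : Fin n) :
    scaledMap j t (single k l c) = single k l (j (t * t * c)) :=
  map_single k l c (j ∘ₗ LinearMap.mulLeft B (t * t))

lemma isSymm_scaledMap (j : A →ₗ[B] B) (t : A) {C : Matrix (Fin n) (Fin n) A} (hC : C.IsSymm) :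
    (scaledMap j t C).IsSymm := hC.map _

lemma scaledMap_map_mul (j : A →ₗ[B] B) (t : A) (D : Matrix (Fin n) (Fin n) B)
    (C : Matrix (Fin n) (Fin n) A) :
    scaledMap j t (D.map (algebraMap B A) * C) = D * scaledMap j t C := by
  ext k l
  simp only [scaledMap, map_apply, Matrix.mul_apply, Finset.mul_sum, map_sum,
    ← linearMap_algebraMap_mul, mul_left_comm]

lemma scaledMap_mul_map (j : A →ₗ[B] B) (t : A) (C : Matrix (Fin n) (Fin n) A)
    (D : Matrix (Fin n) (Fin n) B) :
    scaledMap j t (C * D.map (algebraMap B A)) = scaledMap j t C * D := by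
  ext k l
  simp only [scaledMap, map_apply, Matrix.mul_apply, Finset.mul_sum, map_sum, mul_comm _ (D _ _),
    ← linearMap_algebraMap_mul, mul_comm _ (algebraMap B A _), mul_left_comm]

lemma scaledMap_cyclicSingle (j : A →ₗ[B] B) {U : Fin n → A} {σ : B} {t : A} {u : Fin n → B}
    (h : ClearsDenominators U σ t u) (τ : A) (k l m : Fin n) (d : A) :
    scaledMap j τ (cyclicSingle U k l m d) = cyclicSingle u k l m (j (τ * τ * t * d)) := by
  have hU (m : Fin n) : j (τ * τ * (d * U m)) = j (τ * τ * t * d) * u m := by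
    rw [mul_comm _ (u m), ← linearMap_algebraMap_mul, h.map_eq]
    congr 1
    linear_combination (-(τ * τ * d * U m)) * h.mul_eq_one
  rw [cyclicSingle, scaledMap_add, scaledMap_add, scaledMap_single, scaledMap_single,
    scaledMap_single, cyclicSingle, hU, hU, hU]

end ScaledMap

section LocKoszulProd

variable {n : ℕ} [Fact (4 ≤ n)] {B A : Type} [CommRing B] [CommRing A] [Algebra B A]

lemma koszulProd_smul_scaledMap (j : A →ₗ[B] B) {σ : B} {s : A} (hσ : algebraMap B A σ * s = 1)
    (u : Fin n → B) (t : A) (C : Matrix (Fin n) (Fin n) A) :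
    koszulProd (σ • u) (scaledMap j (s * t) C) = koszulProd u (scaledMap j t C) := by
  rw [koszulProd_smul]
  congr 1
  ext k l
  simp only [scaledMap, Matrix.smul_apply, map_apply, smul_eq_mul, ← linearMap_algebraMap_mul]
  rw [map_mul (algebraMap B A)]
  congr 1
  linear_combination (t * t * C k l * (algebraMap B A σ * s + 1)) * hσ

variable [IsLocalization (invertedElements B A) A]

lemma ClearsDenominators.koszulProd_scaledMap_eq {U : Fin n → A} {σ σ' : B} {t t' : A}
    {u u' : Fin n → B} (h : ClearsDenominators U σ t u) (h' : ClearsDenominators U σ' t' u')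
    (j : A →ₗ[B] B) (C : Matrix (Fin n) (Fin n) A) :
    koszulProd u (scaledMap j t C) = koszulProd u' (scaledMap j t' C) := by
  obtain ⟨s, hs⟩ := h.exists_smul_eq_smul h'
  obtain ⟨s', hs'⟩ := s.2.exists_right_inv
  have inv_mul {σ : B} {t : A} (h : algebraMap B A σ * t = 1) :
      algebraMap B A (s * σ) * (s' * t) = 1 := by
    rw [map_mul, mul_mul_mul_comm, hs', h, one_mul]
  rw [← koszulProd_smul_scaledMap j (inv_mul h'.mul_eq_one), hs,
    ← koszulProd_smul_scaledMap j (inv_mul h.mul_eq_one) u', mul_right_comm]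

/-- The extension of `koszulProd` to vectors over the localization `A`: the matrix entries are taken
back to `B` by a `B`-linear map `j`, and the denominators of `U` are compensated by scaling. -/
noncomputable def locKoszulProd (j : A →ₗ[B] B) (U : Fin n → A) (C : Matrix (Fin n) (Fin n) A) :
    SteinbergGroup n B :=
  koszulProd (exists_clearsDenominators B U).choose_spec.choose_spec.choose
    (scaledMap j (exists_clearsDenominators B U).choose_spec.choose C)

lemma ClearsDenominators.locKoszulProd_eq {U : Fin n → A} {σ : B} {t : A} {u : Fin n → B}
    (h : ClearsDenominators U σ t u) (j : A →ₗ[B] B) (C : Matrix (Fin n) (Fin n) A) :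
    locKoszulProd j U C = koszulProd u (scaledMap j t C) :=
  (exists_clearsDenominators B U).choose_spec.choose_spec.choose_spec.koszulProd_scaledMap_eq h j C

lemma locKoszulProd_add (j : A →ₗ[B] B) (U : Fin n → A) (C D : Matrix (Fin n) (Fin n) A) :
    locKoszulProd j U (C + D) = locKoszulProd j U C * locKoszulProd j U D := by
  rw [locKoszulProd, scaledMap_add, koszulProd_add, locKoszulProd, locKoszulProd]

lemma locKoszulProd_of_isSymm (j : A →ₗ[B] B) (U : Fin n → A) {C : Matrix (Fin n) (Fin n) A}
    (hC : C.IsSymm) : locKoszulProd j U C = 1 :=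
  koszulProd_of_isSymm _ (isSymm_scaledMap j _ hC)

lemma locKoszulProd_zero (j : A →ₗ[B] B) (U : Fin n → A) : locKoszulProd j U 0 = 1 :=
  locKoszulProd_of_isSymm j U isSymm_zero

lemma locKoszulProd_neg (j : A →ₗ[B] B) (U : Fin n → A) (C : Matrix (Fin n) (Fin n) A) :
    locKoszulProd j U (-C) = (locKoszulProd j U C)⁻¹ := by
  rw [eq_inv_iff_mul_eq_one, ← locKoszulProd_add, neg_add_cancel, locKoszulProd_zero]

lemma locKoszulProd_eq_of_isSymm_sub (j : A →ₗ[B] B) (U : Fin n → A)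
    {C D : Matrix (Fin n) (Fin n) A} (h : (C - D).IsSymm) :
    locKoszulProd j U C = locKoszulProd j U D := by
  rw [← sub_add_cancel C D, locKoszulProd_add, locKoszulProd_of_isSymm j U h, one_mul]

lemma locKoszulProd_linearMap_add (j j' : A →ₗ[B] B) (U : Fin n → A)
    (C : Matrix (Fin n) (Fin n) A) :
    locKoszulProd (j + j') U C = locKoszulProd j U C * locKoszulProd j' U C := by
  rw [locKoszulProd, locKoszulProd, locKoszulProd, ← koszulProd_add]
  rfl

lemma locKoszulProd_comp_mulLeft (j : A →ₗ[B] B) (a : A) (U : Fin n → A)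
    (C : Matrix (Fin n) (Fin n) A) :
    locKoszulProd (j ∘ₗ LinearMap.mulLeft B a) U C = locKoszulProd j U (a • C) := by
  rw [locKoszulProd, locKoszulProd]
  congr 1
  ext k l
  simp [scaledMap, mul_left_comm]

end LocKoszulProd

section LocRep

variable {n : ℕ} {B A : Type} [CommRing B] [CommRing A] [Algebra B A]

variable (A) in
/-- The homomorphism `St(n, B) → SL(n, B) → SL(n, A)`. -/
def locRep : SteinbergGroup n B →* SL(n, A) :=
  (Matrix.SpecialLinearGroup.map (algebraMap B A)).comp rep

lemma coe_locRep (b : SteinbergGroup n B) :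
    (↑(locRep A b) : Matrix (Fin n) (Fin n) A) =
      (↑(rep b) : Matrix (Fin n) (Fin n) B).map (algebraMap B A) := rfl

variable [Fact (4 ≤ n)] [IsLocalization (invertedElements B A) A]

lemma conj_locKoszulProd (j : A →ₗ[B] B) (b : SteinbergGroup n B) (U : Fin n → A)
    (C : Matrix (Fin n) (Fin n) A) : conj b (locKoszulProd j U C) =
      locKoszulProd j (↑(locRep A b) *ᵥ U) (formAct (locRep A b) C) := by
  obtain ⟨σ, t, u, h⟩ := exists_clearsDenominators B U
  have h' : ClearsDenominators (↑(locRep A b) *ᵥ U) σ t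
      ((↑(rep b) : Matrix (Fin n) (Fin n) B) *ᵥ u) := by
    refine ⟨h.mul_eq_one, fun k => ?_⟩
    simp only [coe_locRep, mulVec, dotProduct, map_sum, map_mul, h.map_eq, Finset.mul_sum,
      map_apply, mul_left_comm]
  rw [h.locKoszulProd_eq, conj_koszulProd, h'.locKoszulProd_eq, formAct, formAct, ← map_inv,
    ← map_inv, coe_locRep, ← transpose_map, scaledMap_mul_map, scaledMap_map_mul]

lemma coe_locRep_locKoszulProd (j : A →ₗ[B] B) (U : Fin n → A) (C : Matrix (Fin n) (Fin n) A) :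
    (↑(locRep A (locKoszulProd j U C)) : Matrix (Fin n) (Fin n) A) =
      1 + vecMulVec (algebraMap B A (j 1) • U) ((C - Cᵀ) *ᵥ U) := by
  obtain ⟨σ, t, u, h⟩ := exists_clearsDenominators B U
  rw [coe_locRep, h.locKoszulProd_eq, coe_rep_koszulProd]
  ext k l
  simp only [map_apply, Matrix.add_apply, map_add, Matrix.one_apply, vecMulVec_apply, map_mul,
    Pi.smul_apply, smul_eq_mul, apply_ite (algebraMap B A), map_one, map_zero, h.map_eq]
  congr 1
  simp only [mulVec, dotProduct, map_sum, map_mul, h.map_eq, Finset.mul_sum]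
  refine Finset.sum_congr rfl fun i _ => ?_
  simp only [Matrix.sub_apply, transpose_apply, map_sub, scaledMap, map_apply,
    algebraMap_linearMap_apply j (t * t * _)]
  linear_combination (algebraMap B A (j 1) * (U k * ((C l i - C i l) * U i)) *
    (algebraMap B A σ * t + 1)) * h.mul_eq_one

lemma locKoszulProd_commute (j j' : A →ₗ[B] B) {U U' : Fin n → A}
    {C C' : Matrix (Fin n) (Fin n) A} (h : ((C - Cᵀ) *ᵥ U) ⬝ᵥ U' = 0)
    (h' : C' *ᵥ U = C'ᵀ *ᵥ U) : Commute (locKoszulProd j U C) (locKoszulProd j' U' C') := by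
  have hU' : ↑(locRep A (locKoszulProd j U C)) *ᵥ U' = U' := by
    rw [coe_locRep_locKoszulProd, add_mulVec, one_mulVec, vecMulVec_mulVec, h]
    simp
  rw [← conj_eq_self_iff, conj_locKoszulProd, hU']
  refine locKoszulProd_eq_of_isSymm_sub j' U' (isSymm_formAct_sub
    (a := algebraMap B A (j 1) • U) (b := (-C - (-C)ᵀ) *ᵥ U) ?_ ?_)
  · rw [← map_inv, ← locKoszulProd_neg, coe_locRep_locKoszulProd]
  · rw [mulVec_smul, mulVec_smul, h']

end LocRep

section LocCyclicForm

variable {n : ℕ} {B A : Type} [CommRing B] [CommRing A] [Algebra B A]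

lemma cyclicForm_zero (U b c : Fin n → A) : cyclicForm U 0 b c = 0 := by simp [cyclicForm]

lemma cyclicForm_add (U a a' b c : Fin n → A) :
    cyclicForm U (a + a') b c = cyclicForm U a b c + cyclicForm U a' b c := by
  simp only [cyclicForm, add_vecMulVec, vecMulVec_add, add_dotProduct, smul_add, add_smul]
  abel

lemma cyclicForm_sub_transpose_mulVec_dotProduct (U U' a b c : Fin n → A) :
    ((cyclicForm U' a b c - (cyclicForm U' a b c)ᵀ) *ᵥ U) ⬝ᵥ U' = 0 := by
  rw [dotProduct_comm, dotProduct_mulVec, ← mulVec_transpose, transpose_sub, transpose_transpose,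
    sub_mulVec, cyclicForm_mulVec, sub_self, zero_dotProduct]

lemma cyclicSingle_smul_left (s : A) (U : Fin n → A) (k l m : Fin n) (d : A) :
    cyclicSingle (s • U) k l m d = cyclicSingle U k l m (d * s) := by
  simp [cyclicSingle, mul_assoc]

lemma smul_cyclicSingle (s : A) (U : Fin n → A) (k l m : Fin n) (d : A) :
    s • cyclicSingle U k l m d = cyclicSingle U k l m (s * d) := by
  simp [cyclicSingle, mul_assoc, smul_single]

lemma single_induction_of_rotate {p : (Fin n → A) → (Fin n → A) → (Fin n → A) → Prop}
    (a b c : Fin n → A) (rotate : ∀ a b c, p b c a → p a b c) (zero : ∀ b c, p 0 b c)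
    (add : ∀ a a' b c, p a b c → p a' b c → p (a + a') b c)
    (single : ∀ k l m r s t, p (Pi.single k r) (Pi.single l s) (Pi.single m t)) : p a b c := by
  have slot (b c : Fin n → A) (h : ∀ k r, p (Pi.single k r) b c) (a : Fin n → A) : p a b c :=
    single_induction_of_eq_zero ∅ (p := fun a => p a b c) a (by simp) (zero b c)
      (fun a a' _ _ => add a a' b c) (fun k _ r => h k r)
  refine slot b c (fun k r => rotate _ _ _ (slot c _ (fun l s => rotate _ _ _ ?_) b)) a
  exact slot _ _ (fun m t => rotate _ _ _ (single k l m r s t)) c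

variable [Fact (4 ≤ n)] [IsLocalization (invertedElements B A) A]

lemma locKoszulProd_cyclicForm_self (j : A →ₗ[B] B) (U a b c : Fin n → A) :
    locKoszulProd j U (cyclicForm U a b c) = 1 := by
  refine single_induction_of_rotate (p := fun a b c => locKoszulProd j U (cyclicForm U a b c) = 1)
    a b c ?_ ?_ ?_ ?_
  · intro a b c h
    rwa [cyclicForm_rotate]
  · intro b c
    rw [cyclicForm_zero, locKoszulProd_zero]
  · intro a a' b c h h'
    rw [cyclicForm_add, locKoszulProd_add, h, h', one_mul]
  · intro k l m r s t'
    obtain ⟨σ, t, u, h⟩ := exists_clearsDenominators B U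
    rw [cyclicForm_single, h.locKoszulProd_eq, scaledMap_cyclicSingle j h, cyclicSingle,
      koszulProd_add, koszulProd_add, koszulProd_single, koszulProd_single, koszulProd_single,
      koszulElt_mul_koszulElt_mul_koszulElt]

lemma locKoszulProd_vecMulVec_eq (j : A →ₗ[B] B) {U V W W' : Fin n → A} (hV : V ⬝ᵥ U = 0)
    (hW : W ⬝ᵥ U = 1) (hW' : W' ⬝ᵥ U = 1) :
    locKoszulProd j U (vecMulVec V W) = locKoszulProd j U (vecMulVec V W') := by
  have hcyclic : cyclicForm U V W W' = vecMulVec V W + vecMulVec W' V := by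
    simp [cyclicForm, hV, hW, hW']
  have hsymm : (vecMulVec V W' - -vecMulVec W' V).IsSymm := by
    rw [sub_neg_eq_add, IsSymm, transpose_add, transpose_vecMulVec, transpose_vecMulVec, add_comm]
  rw [locKoszulProd_eq_of_isSymm_sub j U hsymm, locKoszulProd_neg, eq_inv_iff_mul_eq_one,
    ← locKoszulProd_add, ← hcyclic, locKoszulProd_cyclicForm_self]

lemma locKoszulProd_add_smul_cyclicSingle (j : A →ₗ[B] B) (U U' : Fin n → A) (r : A)
    (k l m : Fin n) (d : A) : locKoszulProd j (U + r • U') (cyclicSingle U' k l m d) =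
      locKoszulProd j U (cyclicSingle U' k l m d) *
        locKoszulProd j U' (cyclicSingle U k l m (-(r * d))) := by
  obtain ⟨σ, t, f, hσ, hf⟩ := exists_common_denominator (B := B)
    (fun i : Option (Fin n ⊕ Fin n) => i.elim r (Sum.elim U U'))
  set u : Fin n → B := fun k => f (some (Sum.inl k))
  set u' : Fin n → B := fun k => f (some (Sum.inr k))
  have hu : ClearsDenominators U σ t u := ⟨hσ, fun k => hf (some (Sum.inl k))⟩
  have hu' : ClearsDenominators U' σ t u' := ⟨hσ, fun k => hf (some (Sum.inr k))⟩
  have hr : algebraMap B A (f none) = algebraMap B A σ * r := hf none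
  have hσσ : algebraMap B A (σ * σ) * (t * t) = 1 := by
    rw [map_mul, mul_mul_mul_comm, hσ, one_mul]
  have hsum : ClearsDenominators (U + r • U') (σ * σ) (t * t) (σ • u + f none • u') := by
    refine ⟨hσσ, fun k => ?_⟩
    simp only [Pi.add_apply, Pi.smul_apply, smul_eq_mul, map_add, map_mul, hu.map_eq, hu'.map_eq,
      hr]
    ring
  have hsmul : ClearsDenominators U (σ * σ) (t * t) (σ • u) := by
    refine ⟨hσσ, fun k => ?_⟩
    simp only [Pi.smul_apply, smul_eq_mul, map_mul, hu.map_eq, mul_assoc]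
  have hcoeff : f none * j (t * t * (t * t) * t * d) * σ = j (t * t * t * (r * d)) := by
    rw [mul_right_comm, ← linearMap_algebraMap_mul, map_mul (algebraMap B A), hr]
    congr 1
    linear_combination (t * t * t * r * d * (algebraMap B A σ * t + 1)) * hσ
  rw [hsum.locKoszulProd_eq, hsmul.locKoszulProd_eq, hu'.locKoszulProd_eq,
    scaledMap_cyclicSingle j hu', scaledMap_cyclicSingle j hu, koszulProd_add_smul_cyclicSingle,
    cyclicSingle_smul_left, neg_mul, hcoeff, mul_neg, map_neg]

lemma locKoszulProd_cyclicForm_commute (j j' : A →ₗ[B] B) (U U' a b c a' b' c' : Fin n → A)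
    (s : A) : Commute (locKoszulProd j U (cyclicForm U' a b c))
      (locKoszulProd j' U' (s • cyclicForm U a' b' c')) := by
  refine locKoszulProd_commute j j' (cyclicForm_sub_transpose_mulVec_dotProduct _ _ _ _ _) ?_
  rw [transpose_smul, smul_mulVec, smul_mulVec, cyclicForm_mulVec]

lemma locKoszulProd_add_smul_cyclicForm (j : A →ₗ[B] B) (U U' : Fin n → A) (r : A)
    (a b c : Fin n → A) : locKoszulProd j (U + r • U') (cyclicForm U' a b c) =
      locKoszulProd j U (cyclicForm U' a b c) * locKoszulProd j U' (-r • cyclicForm U a b c) := by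
  refine single_induction_of_rotate
    (p := fun a b c => locKoszulProd j (U + r • U') (cyclicForm U' a b c) =
      locKoszulProd j U (cyclicForm U' a b c) * locKoszulProd j U' (-r • cyclicForm U a b c))
    a b c ?_ ?_ ?_ ?_
  · intro a b c h
    rwa [cyclicForm_rotate U', cyclicForm_rotate U]
  · intro b c
    simp only [cyclicForm_zero, smul_zero, locKoszulProd_zero, one_mul]
  · intro a a' b c h h'
    rw [cyclicForm_add, cyclicForm_add, smul_add, locKoszulProd_add, locKoszulProd_add,
      locKoszulProd_add, h, h',
      (locKoszulProd_cyclicForm_commute j j U U' _ _ _ _ _ _ _).mul_mul_mul_comm]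
  · intro k l m r' s t
    rw [cyclicForm_single, cyclicForm_single, locKoszulProd_add_smul_cyclicSingle,
      smul_cyclicSingle, neg_mul]

lemma locKoszulProd_add_smul_vecMulVec (j : A →ₗ[B] B) {U U' V W W' : Fin n → A} (r : A)
    (hVU : V ⬝ᵥ U = 0) (hVU' : V ⬝ᵥ U' = 0) (hWU : W ⬝ᵥ U = 1) (hWU' : W ⬝ᵥ U' = 0)
    (hW'U : W' ⬝ᵥ U = 0) (hW'U' : W' ⬝ᵥ U' = 1) :
    locKoszulProd j (U + r • U') (vecMulVec V W) =
      locKoszulProd j U (vecMulVec V W) * locKoszulProd j U' (r • vecMulVec V W') := by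
  have hU' : cyclicForm U' V W W' = vecMulVec V W := by
    simp [cyclicForm, hVU', hWU', hW'U']
  have hU : cyclicForm U V W W' = vecMulVec W' V := by
    simp [cyclicForm, hVU, hWU, hW'U]
  have hsymm : (-r • vecMulVec W' V - r • vecMulVec V W').IsSymm := by
    rw [neg_smul, ← neg_add', IsSymm, transpose_neg, transpose_add, transpose_smul, transpose_smul,
      transpose_vecMulVec, transpose_vecMulVec, add_comm]
  rw [← hU', locKoszulProd_add_smul_cyclicForm, hU, locKoszulProd_eq_of_isSymm_sub j U' hsymm]

end LocCyclicForm

section FrameElt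

variable {n : ℕ} {B A : Type} [CommRing B] [CommRing A] [Algebra B A]

lemma row_inv_dotProduct_col (γ : SL(n, A)) (k i : Fin n) :
    γ⁻¹.1.row k ⬝ᵥ γ.1.col i = (1 : Matrix (Fin n) (Fin n) A) k i := by
  rw [← Matrix.SpecialLinearGroup.coe_one, ← inv_mul_cancel γ]
  rfl

lemma row_inv_dotProduct_col_self (γ : SL(n, A)) (i : Fin n) :
    γ⁻¹.1.row i ⬝ᵥ γ.1.col i = 1 := by
  rw [row_inv_dotProduct_col, one_apply_eq]

lemma row_inv_dotProduct_col_of_ne (γ : SL(n, A)) {k i : Fin n} (h : k ≠ i) :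
    γ⁻¹.1.row k ⬝ᵥ γ.1.col i = 0 := by
  rw [row_inv_dotProduct_col, one_apply_ne h]

lemma col_mul_transvection (γ : SL(n, A)) {p q : Fin n} (h : p ≠ q) (r : A) (i : Fin n) :
    (γ * Matrix.SpecialLinearGroup.transvection h r).1.col i =
      γ.1.col i + if i = q then r • γ.1.col p else 0 := by
  ext k
  rcases eq_or_ne i q with rfl | hi
  · simp [Matrix.SpecialLinearGroup.transvection_coe, mul_add, mul_comm]
  · simp [Matrix.SpecialLinearGroup.transvection_coe, mul_add, hi]

lemma row_inv_mul_transvection (γ : SL(n, A)) {p q : Fin n} (h : p ≠ q) (r : A) (i : Fin n) :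
    (γ * Matrix.SpecialLinearGroup.transvection h r)⁻¹.1.row i =
      γ⁻¹.1.row i + if i = p then -r • γ⁻¹.1.row q else 0 := by
  rw [_root_.mul_inv_rev, Matrix.SpecialLinearGroup.transvection_inv]
  ext k
  rcases eq_or_ne i p with rfl | hi
  · simp [Matrix.SpecialLinearGroup.transvection_coe, add_mul, -Matrix.SpecialLinearGroup.coe_inv]
  · simp [Matrix.SpecialLinearGroup.transvection_coe, add_mul, hi,
      -Matrix.SpecialLinearGroup.coe_inv]

variable [Fact (4 ≤ n)] [IsLocalization (invertedElements B A) A]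

/-- The lift to `St(n, B)` of the conjugate by `γ ∈ SL(n, A)` of the elementary transvection
`1 + j(1) e_{ik}`. -/
noncomputable def frameElt (j : A →ₗ[B] B) (γ : SL(n, A)) (i k : Fin n) : SteinbergGroup n B :=
  locKoszulProd j (γ.1.col i) (vecMulVec (γ⁻¹.1.row k) (γ⁻¹.1.row i))

lemma frameElt_add (j j' : A →ₗ[B] B) (γ : SL(n, A)) (i k : Fin n) :
    frameElt (j + j') γ i k = frameElt j γ i k * frameElt j' γ i k :=
  locKoszulProd_linearMap_add j j' _ _

lemma frameElt_one (j : A →ₗ[B] B) {i k : Fin n} (h : i ≠ k) :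
    frameElt j 1 i k = x i k (j 1) := by
  have row_one (i : Fin n) : ((1 : SL(n, A))⁻¹.1.row i : Fin n → A) = Pi.single i 1 := by
    simp [funext_iff, Matrix.one_apply, Pi.single_apply, eq_comm]
  have hcol : ClearsDenominators (B := B) ((1 : SL(n, A)).1.col i) 1 1 (Pi.single i 1) := by
    refine ⟨by simp, fun k => ?_⟩
    simp [Matrix.one_apply, Pi.single_apply, apply_ite (algebraMap B A)]
  rw [frameElt, hcol.locKoszulProd_eq, row_one, row_one, vecMulVec_single_single, scaledMap_single,
    koszulProd_single, koszulElt_single_one h, mul_one, mul_one]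

lemma conj_frameElt (j : A →ₗ[B] B) (b : SteinbergGroup n B) (γ : SL(n, A)) (i k : Fin n) :
    conj b (frameElt j γ i k) = frameElt j (locRep A b * γ) i k := by
  rw [frameElt, conj_locKoszulProd, frameElt, formAct, mul_vecMulVec, vecMulVec_mul,
    mulVec_transpose, _root_.mul_inv_rev]
  rfl

lemma frameElt_locRep (j : A →ₗ[B] B) (b : SteinbergGroup n B) {i k : Fin n} (h : i ≠ k) :
    frameElt j (locRep A b) i k = b * x i k (j 1) * b⁻¹ := by
  rw [← frameElt_one j h, ← conj_apply, conj_frameElt, mul_one]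

lemma locRep_frameElt_mul (j : A →ₗ[B] B) (γ : SL(n, A)) {i k : Fin n} (h : i ≠ k) :
    locRep A (frameElt j γ i k) * γ =
      γ * Matrix.SpecialLinearGroup.transvection h (algebraMap B A (j 1)) := by
  have hcol : (vecMulVec (γ⁻¹.1.row k) (γ⁻¹.1.row i) -
      (vecMulVec (γ⁻¹.1.row k) (γ⁻¹.1.row i))ᵀ) *ᵥ γ.1.col i = γ⁻¹.1.row k := by
    rw [transpose_vecMulVec, sub_mulVec, vecMulVec_mulVec, vecMulVec_mulVec,
      row_inv_dotProduct_col_self, row_inv_dotProduct_col_of_ne γ h.symm]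
    simp
  have hrow : γ⁻¹.1.row k ᵥ* γ.1 = Pi.single k 1 := by
    funext l
    exact (row_inv_dotProduct_col γ k l).trans one_eq_pi_single
  have hmul (c : A) : γ.1 * single i k c = vecMulVec (c • γ.1.col i) (Pi.single k 1) := by
    rw [← mul_one c, ← vecMulVec_single_single, mul_vecMulVec, mulVec_single, mul_one,
      op_smul_eq_smul]
  apply Subtype.ext
  rw [Matrix.SpecialLinearGroup.coe_mul, frameElt, coe_locRep_locKoszulProd, hcol, add_mul,
    one_mul, vecMulVec_mul, hrow, Matrix.SpecialLinearGroup.coe_mul,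
    Matrix.SpecialLinearGroup.transvection_coe, mul_add, mul_one, hmul]

lemma frameElt_mul_transvection (j : A →ₗ[B] B) (γ : SL(n, A)) {p q k l : Fin n} (hpq : p ≠ q)
    (r : A) (hkl : k ≠ l) (hqk : q ≠ k) (hpl : p ≠ l) :
    frameElt j (γ * Matrix.SpecialLinearGroup.transvection hpq r) k l = frameElt j γ k l := by
  rw [frameElt, frameElt, col_mul_transvection, row_inv_mul_transvection, row_inv_mul_transvection,
    if_neg hqk.symm, if_neg hpl.symm, add_zero, add_zero]
  refine locKoszulProd_vecMulVec_eq j (row_inv_dotProduct_col_of_ne γ hkl.symm) ?_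
    (row_inv_dotProduct_col_self γ k)
  rw [add_dotProduct, row_inv_dotProduct_col_self]
  split_ifs
  · rw [smul_dotProduct, row_inv_dotProduct_col_of_ne γ hqk, smul_zero, add_zero]
  · rw [zero_dotProduct, add_zero]

lemma frameElt_mul_transvection_left (j : A →ₗ[B] B) (γ : SL(n, A)) {q k l : Fin n} (hlq : l ≠ q)
    (r : A) (hkl : k ≠ l) (hqk : q ≠ k) :
    frameElt j (γ * Matrix.SpecialLinearGroup.transvection hlq r) k l =
      frameElt j γ k l * frameElt (j ∘ₗ LinearMap.mulLeft B (-r)) γ k q := by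
  rw [frameElt, frameElt, frameElt, col_mul_transvection, row_inv_mul_transvection,
    row_inv_mul_transvection, if_neg hqk.symm, if_pos rfl, if_neg hkl, add_zero, add_zero,
    add_vecMulVec, locKoszulProd_add, locKoszulProd_comp_mulLeft, smul_vecMulVec]

lemma frameElt_mul_transvection_right (j : A →ₗ[B] B) (γ : SL(n, A)) {p k l : Fin n} (hpk : p ≠ k)
    (r : A) (hkl : k ≠ l) (hpl : p ≠ l) :
    frameElt j (γ * Matrix.SpecialLinearGroup.transvection hpk r) k l =
      frameElt j γ k l * frameElt (j ∘ₗ LinearMap.mulLeft B r) γ p l := by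
  rw [frameElt, frameElt, frameElt, col_mul_transvection, row_inv_mul_transvection,
    row_inv_mul_transvection, if_neg hpl.symm, if_pos rfl, if_neg hpk.symm, add_zero, add_zero,
    locKoszulProd_comp_mulLeft]
  exact locKoszulProd_add_smul_vecMulVec j r (row_inv_dotProduct_col_of_ne γ hkl.symm)
    (row_inv_dotProduct_col_of_ne γ hpl.symm) (row_inv_dotProduct_col_self γ k)
    (row_inv_dotProduct_col_of_ne γ hpk.symm) (row_inv_dotProduct_col_of_ne γ hpk)
    (row_inv_dotProduct_col_self γ p)

lemma frameElt_commute (j j' : A →ₗ[B] B) (γ : SL(n, A)) {p q k l : Fin n} (hpq : p ≠ q)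
    (hkl : k ≠ l) (hqk : q ≠ k) (hpl : p ≠ l) :
    Commute (frameElt j γ p q) (frameElt j' γ k l) := by
  rw [← conj_eq_self_iff, conj_frameElt, locRep_frameElt_mul _ _ hpq,
    frameElt_mul_transvection _ _ _ _ hkl hqk hpl]

lemma frameElt_mul_frameElt (j j' : A →ₗ[B] B) (γ : SL(n, A)) {i l k : Fin n} (hil : i ≠ l)
    (hlk : l ≠ k) (hik : i ≠ k) : frameElt j γ i l * frameElt j' γ l k =
      frameElt j' γ l k * frameElt (j' ∘ₗ LinearMap.mulLeft B (algebraMap B A (j 1))) γ i k *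
        frameElt j γ i l := by
  rw [← frameElt_mul_transvection_right j' γ hil _ hlk hik, ← locRep_frameElt_mul j γ hil,
    ← conj_frameElt, conj_apply, inv_mul_cancel_right]

end FrameElt

section FrameExtension

/-- Right translation of functions on a group. -/
def rightTranslation (H G : Type*) [Group H] [Group G] : H →* MulAut (H → G) where
  toFun h :=
    { toFun := fun f γ => f (γ * h)
      invFun := fun f γ => f (γ * h⁻¹)
      left_inv := fun f => by simp
      right_inv := fun f => by simp
      map_mul' := fun _ _ => rfl }
  map_one' := by ext; simp
  map_mul' _ _ := by ext; simp [mul_assoc]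

/-- Compatible ring endomorphisms `const` of `A` and `baseConst` of `B`, together with `B`-linear
maps `diff p : A → B` lifting the multiplications by `p - const p`. For polynomials, `const` is the
constant term. -/
structure ConstSplitting (B A : Type) [CommRing B] [CommRing A] [Algebra B A] where
  const : A →+* A
  baseConst : B →+* B
  diff : A →+ (A →ₗ[B] B)
  algebraMap_diff_one : ∀ p, algebraMap B A (diff p 1) = p - const p
  diff_algebraMap_one : ∀ b, diff (algebraMap B A b) 1 = b - baseConst b
  diff_mul : ∀ p q c, diff (p * q) c = diff p (q * c) + diff q (const p * c)

variable {n : ℕ} {B A : Type} [CommRing B] [CommRing A] [Algebra B A]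

variable (n B A) in
/-- The semidirect product of `SL(n, A)` with the group of functions `SL(n, A) → St(n, B)`. Its
elements `(f, δ)` are the crossed substitutes for single lifts to `St(n, B)`: the value `f γ` is a
lift after conjugation by `γ`. -/
abbrev FrameExtension : Type :=
  (SL(n, A) → SteinbergGroup n B) ⋊[rightTranslation SL(n, A) (SteinbergGroup n B)] SL(n, A)

variable (D : ConstSplitting B A)

lemma ConstSplitting.diff_mul_add (r s : A) :
    D.diff (r * s) + D.diff r ∘ₗ LinearMap.mulLeft B (-D.const s) =
      D.diff s ∘ₗ LinearMap.mulLeft B (algebraMap B A (D.diff r 1)) +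
        D.diff s ∘ₗ LinearMap.mulLeft B (D.const r) := by
  ext c
  simp only [LinearMap.add_apply, LinearMap.comp_apply, LinearMap.mulLeft_apply]
  rw [mul_comm r s, D.diff_mul, ← map_add (D.diff s), D.algebraMap_diff_one, neg_mul, map_neg,
    ← add_mul, sub_add_cancel, add_neg_cancel_right]

variable [Fact (4 ≤ n)] [IsLocalization (invertedElements B A) A]

/-- The image of `x_{ij}(p)` in the `FrameExtension`. -/
noncomputable def frameExt (i j : Fin n) (h : i ≠ j) (p : A) : FrameExtension n B A :=
  ⟨fun γ => frameElt (D.diff p) γ i j, Matrix.SpecialLinearGroup.transvection h (D.const p)⟩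

lemma frameExt_mul_left {i j k l : Fin n} (hij : i ≠ j) (hkl : k ≠ l) (p q : A) :
    (frameExt D i j hij p * frameExt D k l hkl q).left = fun γ => frameElt (D.diff p) γ i j *
      frameElt (D.diff q) (γ * Matrix.SpecialLinearGroup.transvection hij (D.const p)) k l := rfl

lemma frameElt_mul_frameElt_mul_transvection (γ : SL(n, A)) {i j k : Fin n} (hij : i ≠ j)
    (hjk : j ≠ k) (hik : i ≠ k) (r s : A) :
    frameElt (D.diff r) γ i j * frameElt (D.diff s)
        (γ * Matrix.SpecialLinearGroup.transvection hij (D.const r)) j k =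
      frameElt (D.diff (r * s)) γ i k * (frameElt (D.diff s) γ j k * frameElt (D.diff r)
        (γ * Matrix.SpecialLinearGroup.transvection hjk (D.const s)) i j) := by
  have commute_ij (f g : A →ₗ[B] B) : Commute (frameElt f γ i k) (frameElt g γ i j) :=
    frameElt_commute f g γ hik hij hik.symm hij
  have commute_jk (f g : A →ₗ[B] B) : Commute (frameElt f γ i k) (frameElt g γ j k) :=
    frameElt_commute f g γ hik hjk hjk.symm hik
  rw [frameElt_mul_transvection_right _ γ hij _ hjk hik,
    frameElt_mul_transvection_left _ γ hjk _ hij hik.symm]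
  calc
    _ = frameElt (D.diff s) γ j k * frameElt (D.diff r) γ i j *
        (frameElt (D.diff s ∘ₗ LinearMap.mulLeft B (algebraMap B A (D.diff r 1))) γ i k *
          frameElt (D.diff s ∘ₗ LinearMap.mulLeft B (D.const r)) γ i k) := by
      rw [← mul_assoc, frameElt_mul_frameElt _ _ γ hij hjk hik, mul_assoc (frameElt _ γ j k),
        (commute_ij _ _).eq]
      simp only [mul_assoc]
    _ = frameElt (D.diff s) γ j k * frameElt (D.diff r) γ i j * (frameElt (D.diff (r * s)) γ i k *
          frameElt (D.diff r ∘ₗ LinearMap.mulLeft B (-D.const s)) γ i k) := by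
      rw [← frameElt_add, ← D.diff_mul_add, frameElt_add]
    _ = _ := by
      rw [← mul_assoc, ← ((commute_jk _ _).mul_right (commute_ij _ _)).eq]
      simp only [mul_assoc]

lemma isSteinbergFamily_frameExt : IsSteinbergFamily (frameExt (n := n) D) where
  add i j h p q := by
    ext1
    · rw [frameExt_mul_left]
      funext γ
      rw [frameElt_mul_transvection _ _ _ _ h h.symm h, ← frameElt_add, ← map_add]
      rfl
    · simp [frameExt, Matrix.SpecialLinearGroup.transvection_add]
  commute i j h k hij hhk hjh hik r s := by
    rw [commute_iff_eq]
    ext1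
    · rw [frameExt_mul_left, frameExt_mul_left]
      funext γ
      rw [frameElt_mul_transvection _ _ _ _ hhk hjh hik,
        frameElt_mul_transvection _ _ _ _ hij hik.symm hjh.symm]
      exact frameElt_commute _ _ _ hij hhk hjh hik
    · exact isSteinbergFamily_transvection.commute i j h k hij hhk hjh hik _ _
  commutatorElement i j k hij hjk hik r s := by
    rw [commutatorElement_def, mul_inv_eq_iff_eq_mul, mul_inv_eq_iff_eq_mul, mul_assoc]
    ext1
    · funext γ
      refine (frameElt_mul_frameElt_mul_transvection D γ hij hjk hik r s).trans ?_
      rw [SemidirectProduct.mul_left, frameExt_mul_left]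
      change _ = _ * (frameElt _ (γ * Matrix.SpecialLinearGroup.transvection hik _) j k *
        frameElt _ (γ * Matrix.SpecialLinearGroup.transvection hik _ * _) i j)
      rw [frameElt_mul_transvection_left _ _ hjk _ hij hik.symm,
        frameElt_mul_transvection_left _ _ hjk _ hij hik.symm,
        frameElt_mul_transvection _ _ hik _ hjk hjk.symm hik,
        frameElt_mul_transvection _ _ hik _ hij hik.symm hij,
        frameElt_mul_transvection _ _ hik _ hik hik.symm hik]
      rfl
    · have := isSteinbergFamily_transvection.commutatorElement i j k hij hjk hik
        (D.const r) (D.const s)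
      rw [commutatorElement_def, mul_inv_eq_iff_eq_mul, mul_inv_eq_iff_eq_mul, mul_assoc] at this
      simpa [frameExt] using this

/-- The homomorphism from `St(n, A)` sending `x_{ij}(p)` to `frameExt D i j p`. -/
noncomputable def toFrameExtension : SteinbergGroup n A →* FrameExtension n B A :=
  lift _ (isSteinbergFamily_frameExt D)

lemma toFrameExtension_x {i j : Fin n} (h : i ≠ j) (p : A) :
    toFrameExtension D (x i j p) = frameExt D i j h p :=
  lift_x _ _ h p

end FrameExtension

section Map

variable {n : ℕ} {B A : Type} [CommRing B] [CommRing A]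

/-- The homomorphism of Steinberg groups induced by a ring homomorphism. -/
def map (φ : B →+* A) : SteinbergGroup n B →* SteinbergGroup n A :=
  lift (fun i j _ r => x i j (φ r))
    { add := fun i j _ r s => by rw [map_add, x_add]
      commute := fun i j h k _ _ hjh hik r s => x_commute hjh hik _ _
      commutatorElement := fun i j k hij hjk hik r s => by
        rw [map_mul, commutatorElement_x_x hij hjk hik] }

lemma map_x (φ : B →+* A) (i j : Fin n) (r : B) : map φ (x i j r) = x i j (φ r) := by
  rcases eq_or_ne i j with rfl | h
  · simp [x_self]
  · exact lift_x _ _ h r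

lemma eq_map_of_stx {f : SteinbergGroup n B →* SteinbergGroup n A} {φ : B →+* A}
    (hf : ∀ i j h r, f (stx n B i j h r) = stx n A i j h (φ r)) : f = map φ :=
  hom_ext fun i j h r => by rw [map_x, x_of_ne h, x_of_ne h, hf]

lemma map_comp {C : Type} [CommRing C] (ψ : A →+* C) (φ : B →+* A) :
    (map (ψ.comp φ) : SteinbergGroup n B →* SteinbergGroup n C) = (map ψ).comp (map φ) :=
  hom_ext fun i j _ r => by simp [map_x]

lemma map_contragredient (φ : B →+* A) (g : SteinbergGroup n B) :
    map φ (contragredient g) = contragredient (map φ g) :=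
  DFunLike.congr_fun (f := (map φ).comp contragredient) (g := contragredient.comp (map φ))
    (hom_ext fun i j _ r => by simp [map_x, contragredient_x]) g

lemma map_row (φ : B →+* A) (i : Fin n) (v : Fin n → B) : map φ (row i v) = row i (φ ∘ v) := by
  induction v using Pi.single_induction with
  | zero =>
    have : φ ∘ (0 : Fin n → B) = 0 := funext fun _ => map_zero φ
    rw [row_zero, _root_.map_one, this, row_zero]
  | add v w hv hw =>
    rw [row_add, map_mul, hv, hw, ← row_add]
    congr 1
    ext
    simp
  | single k a =>
    have : φ ∘ Pi.single k a = Pi.single k (φ a) :=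
      funext fun l => Pi.apply_single (fun _ => φ) (fun _ => map_zero φ) k a l
    rw [row_single, map_x, this, row_single]

lemma map_col (φ : B →+* A) (i : Fin n) (v : Fin n → B) : map φ (col i v) = col i (φ ∘ v) := by
  rw [col, map_contragredient, map_row, col]
  congr 2
  ext
  simp

lemma map_transvec (φ : B →+* A) (i : Fin n) (u v : Fin n → B) :
    map φ (transvec i u v) = transvec i (φ ∘ u) (φ ∘ v) := by
  rw [transvec, colRow, map_mul, map_commutatorElement, map_col, map_row, map_row, transvec, colRow]
  congr 2
  ext
  simp

lemma comp_koszulVec {ι : Type*} [DecidableEq ι] (φ : B →+* A) (u : ι → B) (k l : ι) (c : B) :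
    φ ∘ koszulVec u k l c = koszulVec (φ ∘ u) k l (φ c) := by
  ext m
  simp [koszulVec, Pi.single_apply, apply_ite φ]

lemma map_koszulProd [Fact (4 ≤ n)] (φ : B →+* A) (u : Fin n → B)
    (C : Matrix (Fin n) (Fin n) B) : map φ (koszulProd u C) = koszulProd (φ ∘ u) (C.map φ) := by
  induction C using Matrix.induction_on' with
  | h_zero => rw [koszulProd_zero, _root_.map_one, Matrix.map_zero _ (map_zero φ), koszulProd_zero]
  | h_add C D hC hD =>
    rw [koszulProd_add, map_mul, hC, hD, ← koszulProd_add, Matrix.map_add _ (map_add φ)]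
  | h_std_basis k l c =>
    rw [koszulProd_single, Matrix.map_single, koszulProd_single, koszulElt, map_transvec,
      comp_koszulVec, koszulElt]

end Map

section RelLift

variable {n : ℕ} {B A : Type} [CommRing B] [CommRing A] [Algebra B A]

lemma locRep_eq_rep_map (b : SteinbergGroup n B) : locRep A b = rep (map (algebraMap B A) b) := by
  refine DFunLike.congr_fun (g := rep.comp (map (algebraMap B A))) (hom_ext fun i j h r => ?_) b
  apply Subtype.ext
  rw [coe_locRep, MonoidHom.comp_apply, map_x, coe_rep_x h, coe_rep_x h,
    Matrix.map_add _ (map_add _), Matrix.map_one _ (map_zero _) (map_one _), Matrix.map_single]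

lemma ConstSplitting.const_comp_algebraMap (D : ConstSplitting B A) :
    D.const.comp (algebraMap B A) = (algebraMap B A).comp D.baseConst := by
  ext b
  have := D.algebraMap_diff_one (algebraMap B A b)
  rw [D.diff_algebraMap_one, map_sub] at this
  exact (sub_right_injective this).symm

lemma rep_map_const_map_algebraMap (D : ConstSplitting B A) (g : SteinbergGroup n B) :
    rep (map D.const (map (algebraMap B A) g)) = locRep A (map D.baseConst g) := by
  rw [← MonoidHom.comp_apply (map D.const), ← map_comp, D.const_comp_algebraMap, map_comp,
    MonoidHom.comp_apply, locRep_eq_rep_map]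

instance isLocalization_invertedElements_self : IsLocalization (invertedElements A A) A :=
  IsLocalization.self fun _ h => h

variable [Fact (4 ≤ n)] [IsLocalization (invertedElements B A) A] (D : ConstSplitting B A)

lemma map_locKoszulProd (j : A →ₗ[B] B) (U : Fin n → A) (C : Matrix (Fin n) (Fin n) A) :
    map (algebraMap B A) (locKoszulProd j U C) =
      locKoszulProd (LinearMap.mulLeft A (algebraMap B A (j 1))) U C := by
  obtain ⟨σ, t, u, h⟩ := exists_clearsDenominators B U
  have h' : ClearsDenominators U (algebraMap B A σ) t (algebraMap B A ∘ u) :=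
    ⟨h.mul_eq_one, h.map_eq⟩
  rw [h.locKoszulProd_eq, h'.locKoszulProd_eq, map_koszulProd]
  congr 1
  ext k l
  simp only [scaledMap, map_apply, LinearMap.mulLeft_apply]
  rw [algebraMap_linearMap_apply, mul_comm]

lemma map_frameElt_rep (j : A →ₗ[B] B) (g : SteinbergGroup n A) {i k : Fin n} (h : i ≠ k) :
    map (algebraMap B A) (frameElt j (rep g) i k) = g * x i k (algebraMap B A (j 1)) * g⁻¹ := by
  have := frameElt_locRep (LinearMap.mulLeft A (algebraMap B A (j 1))) g h
  rw [LinearMap.mulLeft_apply, mul_one] at this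
  rw [frameElt, map_locKoszulProd, ← this]
  rfl

lemma toFrameExtension_one_left (γ : SL(n, A)) :
    (toFrameExtension D (1 : SteinbergGroup n A)).left γ = 1 := by
  rw [_root_.map_one]
  rfl

lemma toFrameExtension_mul_left (g h : SteinbergGroup n A) (γ : SL(n, A)) :
    (toFrameExtension D (g * h)).left γ =
      (toFrameExtension D g).left γ * (toFrameExtension D h).left
        (γ * (toFrameExtension D g).right) := by
  rw [map_mul]
  rfl

lemma toFrameExtension_right (g : SteinbergGroup n A) :
    (toFrameExtension D g).right = rep (map D.const g) := by
  refine DFunLike.congr_fun (f := SemidirectProduct.rightHom.comp (toFrameExtension D))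
    (g := rep.comp (map D.const)) (hom_ext fun i j h r => ?_) g
  rw [MonoidHom.comp_apply, toFrameExtension_x D h, MonoidHom.comp_apply, map_x, rep_x h]
  rfl

lemma map_toFrameExtension_left (g c : SteinbergGroup n A) :
    map (algebraMap B A) ((toFrameExtension D g).left (rep c)) =
      c * g * (map D.const g)⁻¹ * c⁻¹ := by
  refine x_induction (p := fun g => ∀ c,
    map (algebraMap B A) ((toFrameExtension D g).left (rep c)) =
      c * g * (map D.const g)⁻¹ * c⁻¹) g ?_ ?_ ?_ c
  · intro c
    simp
  · intro g h hg hh c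
    rw [toFrameExtension_mul_left, map_mul, hg, toFrameExtension_right, ← map_mul, hh, map_mul]
    group
  · intro i j h r c
    rw [toFrameExtension_x D h, map_x, ← x_neg, mul_assoc c, ← x_add, ← sub_eq_add_neg,
      ← D.algebraMap_diff_one]
    exact map_frameElt_rep _ _ h

lemma toFrameExtension_map_left (g c : SteinbergGroup n B) :
    (toFrameExtension D (map (algebraMap B A) g)).left (locRep A c) =
      c * g * (map D.baseConst g)⁻¹ * c⁻¹ := by
  refine x_induction (p := fun g => ∀ c,
    (toFrameExtension D (map (algebraMap B A) g)).left (locRep A c) =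
      c * g * (map D.baseConst g)⁻¹ * c⁻¹) g ?_ ?_ ?_ c
  · intro c
    simp
  · intro g h hg hh c
    rw [map_mul, toFrameExtension_mul_left, hg, toFrameExtension_right,
      rep_map_const_map_algebraMap, ← map_mul, hh, map_mul]
    group
  · intro i j h r c
    rw [map_x, toFrameExtension_x D h, map_x, ← x_neg, mul_assoc c, ← x_add, ← sub_eq_add_neg,
      ← D.diff_algebraMap_one]
    exact frameElt_locRep _ c h

/-- The lifting homomorphism on the kernel of `map D.const`: the component at `1 ∈ SL(n, A)` of
`toFrameExtension D`, which is multiplicative there. -/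
noncomputable def relLift :
    (map D.const : SteinbergGroup n A →* SteinbergGroup n A).ker →* SteinbergGroup n B where
  toFun g := (toFrameExtension D g.1).left 1
  map_one' := toFrameExtension_one_left D 1
  map_mul' g h := by
    rw [Subgroup.coe_mul, toFrameExtension_mul_left, toFrameExtension_right,
      MonoidHom.mem_ker.1 g.2, _root_.map_one, mul_one]

lemma map_relLift (g : (map D.const : SteinbergGroup n A →* SteinbergGroup n A).ker) :
    map (algebraMap B A) (relLift D g) = g := by
  simpa [relLift, MonoidHom.mem_ker.1 g.2] using map_toFrameExtension_left D g.1 1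

lemma relLift_map {g : SteinbergGroup n B} (hg : map D.baseConst g = 1)
    (hmem : map (algebraMap B A) g ∈ (map D.const).ker) : relLift D ⟨_, hmem⟩ = g := by
  simpa [relLift, hg] using toFrameExtension_map_left D g 1

end RelLift

section FiberRing

open Polynomial

variable (R : Type) [CommRing R] (a : R)

/-- The algebra structure given by the projection `μ : R ⋉ X R_a[X] → R_a[X]`. -/
noncomputable instance fiberRingAlgebra : Algebra (fiberRing R a) (Localization.Away a)[X] :=
  ((RingHom.snd R (Localization.Away a)[X]).comp (fiberRing R a).subtype).toAlgebra

/-- The projection `p : R ⋉ X R_a[X] → R`. -/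
noncomputable def fiberProj : fiberRing R a →+* R :=
  (RingHom.fst R (Localization.Away a)[X]).comp (fiberRing R a).subtype

/-- The section `r ↦ (r, λ_a r)` of the projection `R ⋉ X R_a[X] → R`. -/
noncomputable def fiberSection : R →+* fiberRing R a :=
  ((RingHom.id R).prod (C.comp (algebraMap R (Localization.Away a)))).codRestrict (fiberRing R a)
    fun _ => eval_C

variable {R a}

lemma isUnit_algebraMap_fiberSection (N : ℕ) :
    IsUnit (algebraMap (fiberRing R a) (Localization.Away a)[X] (fiberSection R a (a ^ N))) := by
  rw [map_pow, map_pow]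
  exact ((IsLocalization.Away.algebraMap_isUnit a).map C).pow N

lemma exists_mul_algebraMap_eq (c : (Localization.Away a)[X]) :
    ∃ (N : ℕ) (b : fiberRing R a), c * algebraMap (fiberRing R a) (Localization.Away a)[X]
      (fiberSection R a (a ^ N)) = algebraMap (fiberRing R a) (Localization.Away a)[X] b := by
  obtain ⟨N, r, h⟩ := IsLocalization.Away.surj a (eval 0 c)
  refine ⟨N, ⟨(r, c * C (algebraMap R _ (a ^ N))), ?_⟩, rfl⟩
  change eval 0 (c * C _) = algebraMap R _ r
  rw [eval_mul, eval_C, ← h, map_pow]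

lemma exists_fiberSection_mul_eq {b c : fiberRing R a}
    (h : algebraMap (fiberRing R a) (Localization.Away a)[X] b = algebraMap _ _ c) :
    ∃ N : ℕ, fiberSection R a (a ^ N) * b = fiberSection R a (a ^ N) * c := by
  have hfst : algebraMap R (Localization.Away a) b.1.1 = algebraMap R _ c.1.1 := by
    rw [← b.2, ← c.2]
    exact congrArg (eval 0) h
  obtain ⟨⟨_, N, rfl⟩, hN⟩ := (IsLocalization.eq_iff_exists (Submonoid.powers a) _).1 hfst
  exact ⟨N, Subtype.ext (Prod.ext hN (congrArg (C (algebraMap R _ (a ^ N)) * ·) h))⟩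

instance isLocalization_fiberRing :
    IsLocalization (invertedElements (fiberRing R a) (Localization.Away a)[X])
      (Localization.Away a)[X] where
  map_units b := b.2
  surj c := by
    obtain ⟨N, b, h⟩ := exists_mul_algebraMap_eq c
    exact ⟨(b, ⟨_, isUnit_algebraMap_fiberSection N⟩), h⟩
  exists_of_eq h := by
    obtain ⟨N, hN⟩ := exists_fiberSection_mul_eq h
    exact ⟨⟨_, isUnit_algebraMap_fiberSection N⟩, hN⟩

/-- Multiplication by a polynomial `h` without constant term, as a map `R_a[X] → R ⋉ X R_a[X]`. -/
noncomputable def mulFiber (h : (Localization.Away a)[X]) (h0 : eval 0 h = 0) :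
    (Localization.Away a)[X] →ₗ[fiberRing R a] fiberRing R a where
  toFun c := ⟨(0, h * c), (by simp [h0] : eval 0 (h * c) = algebraMap R _ 0)⟩
  map_add' c d := Subtype.ext (Prod.ext (add_zero 0).symm (mul_add h c d))
  map_smul' b c := Subtype.ext (Prod.ext (mul_zero b.1.1).symm (mul_left_comm h b.1.2 c))

variable (R a) in
/-- The additive map sending `p` to multiplication by `p - p(0)`. -/
noncomputable def fiberDiff :
    (Localization.Away a)[X] →+ ((Localization.Away a)[X] →ₗ[fiberRing R a] fiberRing R a) :=
  AddMonoidHom.mk' (fun p => mulFiber (R := R) (a := a) (p - C (eval 0 p)) (by simp))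
    fun p q => by
      refine LinearMap.ext fun c => Subtype.ext (Prod.ext (add_zero 0).symm ?_)
      change (p + q - C (eval 0 (p + q))) * c = (p - C (eval 0 p)) * c + (q - C (eval 0 q)) * c
      rw [eval_add, C_add]
      ring

variable (R a) in
/-- The splitting of the polynomials over `R_a` into constant term and terms divisible by `X`. -/
noncomputable def fiberSplitting : ConstSplitting (fiberRing R a) (Localization.Away a)[X] where
  const := C.comp (evalRingHom 0)
  baseConst := (fiberSection R a).comp (fiberProj R a)
  diff := fiberDiff R a
  algebraMap_diff_one p := mul_one (p - C (eval 0 p))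
  diff_algebraMap_one b := by
    refine Subtype.ext (Prod.ext (sub_self b.1.1).symm ?_)
    change (b.1.2 - C (eval 0 b.1.2)) * 1 = b.1.2 - C (algebraMap R _ b.1.1)
    rw [mul_one, b.2]
  diff_mul p q c := by
    refine Subtype.ext (Prod.ext (add_zero 0).symm ?_)
    change (p * q - C (eval 0 (p * q))) * c =
      (p - C (eval 0 p)) * (q * c) + (q - C (eval 0 q)) * (C (eval 0 p) * c)
    rw [eval_mul, C_mul]
    ring

lemma map_baseConst_eq_one_of_map_fiberProj {n : ℕ} {h : SteinbergGroup n (fiberRing R a)}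
    (hh : map (fiberProj R a) h = 1) : map (fiberSplitting R a).baseConst h = 1 := by
  rw [fiberSplitting, map_comp, MonoidHom.comp_apply, hh, _root_.map_one]

lemma ker_map_evalRingHom_le (n : ℕ) :
    (map (n := n) (evalRingHom (0 : Localization.Away a))).ker ≤
      (map (fiberSplitting R a).const).ker := by
  intro g hg
  rw [MonoidHom.mem_ker] at hg ⊢
  rw [fiberSplitting, map_comp, MonoidHom.comp_apply, hg, _root_.map_one]

end FiberRing

end SteinbergGroup

theorem stmt5 (n : ℕ) (hn : 4 ≤ n) : TulenbaevLifting n := by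
  intro R _ a _ pSt hp μSt hμ ev0 hev
  have : Fact (4 ≤ n) := ⟨hn⟩
  obtain rfl : pSt = SteinbergGroup.map (SteinbergGroup.fiberProj R a) :=
    SteinbergGroup.eq_map_of_stx hp
  obtain rfl : μSt = SteinbergGroup.map (algebraMap _ _) := SteinbergGroup.eq_map_of_stx hμ
  obtain rfl : ev0 = SteinbergGroup.map (Polynomial.evalRingHom 0) :=
    SteinbergGroup.eq_map_of_stx hev
  let D := SteinbergGroup.fiberSplitting R a
  have ker_le := SteinbergGroup.ker_map_evalRingHom_le (a := a) n
  exact ⟨(SteinbergGroup.relLift D).comp (Subgroup.inclusion ker_le),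
    fun g => SteinbergGroup.map_relLift D (Subgroup.inclusion ker_le g),
    fun h hh hm => SteinbergGroup.relLift_map D
      (SteinbergGroup.map_baseConst_eq_one_of_map_fiberProj hh) (ker_le hm)⟩
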